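/- (Theorem 13) Let 0 < θ₀ < 1, 0 < θ ≤ 1, 0 < q₀, r₀, r ≤ ∞, a, a₀, b₀ ∈ SV, and ‖s^{-1/r₀} b₀(s)/a₀(s)‖_{r₀,(1,∞)} < ∞; if θ = 1 assume additionally ‖s^{-1/r} a(s)‖_{r,(0,1)} < ∞. Put c₀(t) = a₀(t) ‖s^{-1/r₀} b₀(s)/a₀(s)‖_{r₀,(t,∞)} and ρ(t) = t^{1-θ₀} c₀(t). Then (Ā^𝓛_{θ₀,r₀,b₀,q₀,a₀}, A₁)_{θ,r;a} ≅ Ā_{η,r;a^#}, where η = (1-θ)θ₀ + θ and a^#(t) = c₀(t)^{1-θ} a(ρ(t)). -/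

import Mathlib

open MeasureTheory Set ENNReal Filter

noncomputable section

/-- The `L_q` quasi-norm (with respect to Lebesgue measure) of an `ℝ≥0∞`-valued
function over a set of reals; for `q = ∞` it is the essential supremum. -/
def LqNorm (q : ℝ≥0∞) (s : Set ℝ) (g : ℝ → ℝ≥0∞) : ℝ≥0∞ :=
  if q = ∞ then essSup g (volume.restrict s)
  else (∫⁻ t in s, g t ^ q.toReal) ^ q⁻¹.toReal

/-- The weight `s ↦ s ^ (-1/r) * b s`, as an `ℝ≥0∞`-valued function
(`1/∞ = 0` by convention). -/
def svWgt (r : ℝ≥0∞) (b : ℝ → ℝ) : ℝ → ℝ≥0∞ :=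
  fun s => ENNReal.ofReal (s ^ (-(r⁻¹.toReal)) * b s)

/-- `f` and `g` are equivalent on `s`: each is bounded by a constant multiple
of the other there. -/
def EquivOn (s : Set ℝ) (f g : ℝ → ℝ) : Prop :=
  ∃ C : ℝ, 0 < C ∧ ∀ t ∈ s, C⁻¹ * g t ≤ f t ∧ f t ≤ C * g t

/-- A positive measurable function `b` on `(0,∞)` is slowly varying if for every
`ε > 0`, `t ^ ε * b t` is equivalent to a non-decreasing function and
`t ^ (-ε) * b t` is equivalent to a non-increasing function. -/
def SlowlyVarying (b : ℝ → ℝ) : Prop :=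
  AEMeasurable b (volume.restrict (Ioi 0)) ∧ (∀ t ∈ Ioi (0:ℝ), 0 < b t) ∧
    ∀ ε : ℝ, 0 < ε →
      (∃ g : ℝ → ℝ, MonotoneOn g (Ioi 0) ∧ EquivOn (Ioi 0) (fun t => t ^ ε * b t) g) ∧
      (∃ g : ℝ → ℝ, AntitoneOn g (Ioi 0) ∧ EquivOn (Ioi 0) (fun t => t ^ (-ε) * b t) g)

/-- A quasi-Banach space continuously embedded into the ambient (Hausdorff) space `E`,
recorded via its extended-real-valued quasi-norm; the space itself is the set of
vectors of finite quasi-norm. -/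
structure QuasiBanach (E : Type*) [AddCommGroup E] [Module ℝ E] where
  N : E → ℝ≥0∞
  zero : N 0 = 0
  definite : ∀ x, N x = 0 → x = 0
  smul : ∀ (c : ℝ) (x : E), N (c • x) = ENNReal.ofReal |c| * N x
  quasi : ∃ C : ℝ≥0∞, 1 ≤ C ∧ C ≠ ∞ ∧ ∀ x y, N (x + y) ≤ C * (N x + N y)
  complete : ∀ f : ℕ → E,
    (∀ ε : ℝ≥0∞, 0 < ε → ∃ M : ℕ, ∀ m ≥ M, ∀ n ≥ M, N (f m - f n) < ε) →
    (∀ n, N (f n) ≠ ∞) →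
    ∃ g : E, N g ≠ ∞ ∧ Tendsto (fun n => N (f n - g)) atTop (nhds 0)

variable {E : Type*} [AddCommGroup E] [Module ℝ E]

/-- The Peetre K-functional of the couple whose quasi-norms are `N₀`, `N₁`. -/
def Kf (N₀ N₁ : E → ℝ≥0∞) (t : ℝ) (f : E) : ℝ≥0∞ :=
  ⨅ g : E, N₀ g + ENNReal.ofReal t * N₁ (f - g)

/-- The quasi-norm of the real interpolation space `Ā_{θ,q;b}`. -/
def normK (N₀ N₁ : E → ℝ≥0∞) (θ : ℝ) (q : ℝ≥0∞) (b : ℝ → ℝ) (f : E) : ℝ≥0∞ :=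
  LqNorm q (Ioi 0) fun u =>
    ENNReal.ofReal (u ^ (-θ - q⁻¹.toReal) * b u) * Kf N₀ N₁ u f

/-- The quasi-norm of the limiting interpolation space `Ā^𝓛_{σ,r,b,q,a}`. -/
def normL (N₀ N₁ : E → ℝ≥0∞) (σ : ℝ) (r q : ℝ≥0∞) (b a : ℝ → ℝ) (f : E) : ℝ≥0∞ :=
  LqNorm r (Ioi 0) fun t =>
    ENNReal.ofReal (t ^ (-(r⁻¹.toReal)) * (b t / a t)) *
      LqNorm q (Ioo 0 t) fun u =>
        ENNReal.ofReal (u ^ (-σ - q⁻¹.toReal) * a u) * Kf N₀ N₁ u f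

/-- The quasi-norm of the limiting interpolation space `Ā^𝓡_{σ,r,b,q,a}`. -/
def normR (N₀ N₁ : E → ℝ≥0∞) (σ : ℝ) (r q : ℝ≥0∞) (b a : ℝ → ℝ) (f : E) : ℝ≥0∞ :=
  LqNorm r (Ioi 0) fun t =>
    ENNReal.ofReal (t ^ (-(r⁻¹.toReal)) * (b t / a t)) *
      LqNorm q (Ioi t) fun u =>
        ENNReal.ofReal (u ^ (-σ - q⁻¹.toReal) * a u) * Kf N₀ N₁ u f

/-- Two (extended-real-valued) quasi-norms define the same space with
equivalent quasi-norms. -/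
def EquivNorms (nX nY : E → ℝ≥0∞) : Prop :=
  ∃ C : ℝ≥0∞, 0 < C ∧ C ≠ ∞ ∧ ∀ f : E, C⁻¹ * nY f ≤ nX f ∧ nX f ≤ C * nY f


/-- `L_q` quasi-norm with respect to `du/u`. -/
def Nq (q : ℝ≥0∞) (s : Set ℝ) (F : ℝ → ℝ≥0∞) : ℝ≥0∞ :=
  LqNorm q s (fun u => ENNReal.ofReal (u ^ (-(q⁻¹.toReal))) * F u)

lemma LqNorm_mono {q : ℝ≥0∞} {s : Set ℝ} (hs : MeasurableSet s) {F G : ℝ → ℝ≥0∞}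
    (h : ∀ u ∈ s, F u ≤ G u) : LqNorm q s F ≤ LqNorm q s G := by
  unfold LqNorm
  split_ifs with hq
  · refine essSup_mono_ae ?_
    exact (ae_restrict_iff' hs).2 (Eventually.of_forall h)
  · apply ENNReal.rpow_le_rpow _ ENNReal.toReal_nonneg
    apply setLIntegral_mono' hs
    intro x hx
    exact ENNReal.rpow_le_rpow (h x hx) ENNReal.toReal_nonneg

lemma Nq_mono {q : ℝ≥0∞} {s : Set ℝ} (hs : MeasurableSet s) {F G : ℝ → ℝ≥0∞}
    (h : ∀ u ∈ s, F u ≤ G u) : Nq q s F ≤ Nq q s G :=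
  LqNorm_mono hs fun u hu => mul_le_mul_right (h u hu) _

lemma Nq_mono_set {q : ℝ≥0∞} {s t : Set ℝ} (hst : s ⊆ t) (F : ℝ → ℝ≥0∞) :
    Nq q s F ≤ Nq q t F := by
  unfold Nq LqNorm
  split_ifs with hq
  · exact essSup_mono_measure (Measure.absolutelyContinuous_of_le (Measure.restrict_mono hst le_rfl))
  · apply ENNReal.rpow_le_rpow _ ENNReal.toReal_nonneg
    exact lintegral_mono_set hst

lemma toReal_inv_mul {q : ℝ≥0∞} (hq : 0 < q) (hq' : q ≠ ∞) : q.toReal * q⁻¹.toReal = 1 := by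
  rw [ENNReal.toReal_inv]
  exact mul_inv_cancel₀ (ENNReal.toReal_pos hq.ne' hq').ne'

lemma Nq_const_mul_le {q : ℝ≥0∞} (hq0 : 0 < q) (s : Set ℝ) (c : ℝ≥0∞) (F : ℝ → ℝ≥0∞) :
    c * Nq q s F ≤ Nq q s (fun u => c * F u) := by
  unfold Nq LqNorm
  split_ifs with hq
  · rw [← ENNReal.essSup_const_mul]
    apply le_of_eq
    congr 1
    ext u
    ring
  · calc _ = (c ^ q.toReal * ∫⁻ t in s, (ENNReal.ofReal (t ^ (-(q⁻¹.toReal))) * F t) ^ q.toReal)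
          ^ q⁻¹.toReal := by
          rw [ENNReal.mul_rpow_of_nonneg _ _ ENNReal.toReal_nonneg, ← ENNReal.rpow_mul,
            toReal_inv_mul hq0 hq, ENNReal.rpow_one]
      _ ≤ _ := by
          apply ENNReal.rpow_le_rpow _ ENNReal.toReal_nonneg
          refine (lintegral_const_mul_le _ _).trans ?_
          apply lintegral_mono
          intro u
          simp only
          rw [← ENNReal.mul_rpow_of_nonneg _ _ ENNReal.toReal_nonneg]
          apply le_of_eq
          congr 1
          ring

lemma Nq_le_const_mul {q : ℝ≥0∞} (hq0 : 0 < q) (s : Set ℝ) {c : ℝ≥0∞} (hc : c ≠ ∞)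
    (F : ℝ → ℝ≥0∞) :
    Nq q s (fun u => c * F u) ≤ c * Nq q s F := by
  unfold Nq LqNorm
  split_ifs with hq
  · rw [← ENNReal.essSup_const_mul]
    apply le_of_eq
    congr 1
    ext u
    ring
  · apply le_of_eq
    calc _ = (c ^ q.toReal * ∫⁻ t in s, (ENNReal.ofReal (t ^ (-(q⁻¹.toReal))) * F t) ^ q.toReal)
          ^ q⁻¹.toReal := by
          rw [← lintegral_const_mul' _ _ (ENNReal.rpow_ne_top_of_nonneg ENNReal.toReal_nonneg hc)]
          congr 2
          ext u
          rw [← ENNReal.mul_rpow_of_nonneg _ _ ENNReal.toReal_nonneg]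
          congr 1
          ring
      _ = _ := by
          rw [ENNReal.mul_rpow_of_nonneg _ _ ENNReal.toReal_nonneg, ← ENNReal.rpow_mul,
            toReal_inv_mul hq0 hq, ENNReal.rpow_one]

lemma ennreal_add_rpow_le (x y : ℝ≥0∞) {p : ℝ} (hp : 0 ≤ p) :
    (x + y) ^ p ≤ 2 ^ p * (x ^ p + y ^ p) := by
  rcases le_total x y with h | h
  · calc (x + y) ^ p ≤ (2 * y) ^ p := by
          apply ENNReal.rpow_le_rpow _ hp
          rw [two_mul]; gcongr
      _ = 2 ^ p * y ^ p := ENNReal.mul_rpow_of_nonneg _ _ hp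
      _ ≤ _ := by gcongr; exact le_add_self
  · calc (x + y) ^ p ≤ (2 * x) ^ p := by
          apply ENNReal.rpow_le_rpow _ hp
          rw [two_mul]; gcongr
      _ = 2 ^ p * x ^ p := ENNReal.mul_rpow_of_nonneg _ _ hp
      _ ≤ _ := by gcongr; exact le_self_add

lemma Nq_union (q : ℝ≥0∞) : ∃ C : ℝ, 0 < C ∧ ∀ (s t : Set ℝ) (F : ℝ → ℝ≥0∞),
    Nq q (s ∪ t) F ≤ ENNReal.ofReal C * (Nq q s F + Nq q t F) := by
  by_cases hq : q = ∞
  · refine ⟨1, one_pos, fun s t F => ?_⟩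
    rw [ENNReal.ofReal_one, one_mul]
    unfold Nq LqNorm
    rw [if_pos hq, if_pos hq, if_pos hq]
    refine essSup_le_of_ae_le _ ?_
    rw [EventuallyLE, ae_restrict_union_iff]
    constructor
    · filter_upwards [ENNReal.ae_le_essSup (μ := volume.restrict s)
        (fun u => ENNReal.ofReal (u ^ (-(q⁻¹.toReal))) * F u)] with u hu
      exact hu.trans le_self_add
    · filter_upwards [ENNReal.ae_le_essSup (μ := volume.restrict t)
        (fun u => ENNReal.ofReal (u ^ (-(q⁻¹.toReal))) * F u)] with u hu
      exact hu.trans le_add_self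
  · refine ⟨2 ^ q⁻¹.toReal, by positivity, fun s t F => ?_⟩
    unfold Nq LqNorm
    rw [if_neg hq, if_neg hq, if_neg hq]
    rw [← ENNReal.ofReal_rpow_of_pos two_pos, ENNReal.ofReal_ofNat]
    refine le_trans ?_ (ennreal_add_rpow_le _ _ ENNReal.toReal_nonneg)
    apply ENNReal.rpow_le_rpow _ ENNReal.toReal_nonneg
    exact lintegral_union_le _ _ _

lemma lint_pow_zero {p t : ℝ} (hp : 0 < p) (ht : 0 < t) :
    ∫⁻ u in Ioc 0 t, ENNReal.ofReal (u ^ (p - 1)) = ENNReal.ofReal (t ^ p / p) := by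
  rw [← ofReal_integral_eq_lintegral_ofReal]
  · congr 1
    rw [← intervalIntegral.integral_of_le ht.le, integral_rpow (Or.inl (by linarith))]
    simp [Real.zero_rpow hp.ne']
  · change IntegrableOn _ _ _
    rw [← intervalIntegrable_iff_integrableOn_Ioc_of_le ht.le]
    exact intervalIntegral.intervalIntegrable_rpow' (by linarith)
  · refine (ae_restrict_iff' measurableSet_Ioc).2 (Eventually.of_forall fun u hu => ?_)
    exact Real.rpow_nonneg hu.1.le _

lemma lint_pow_top {p t : ℝ} (hp : 0 < p) (ht : 0 < t) :
    ∫⁻ u in Ioi t, ENNReal.ofReal (u ^ (-p - 1)) = ENNReal.ofReal (t ^ (-p) / p) := by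
  rw [← ofReal_integral_eq_lintegral_ofReal]
  · congr 1
    rw [integral_Ioi_rpow_of_lt (by linarith) ht]
    simp [neg_div_neg_eq]
  · exact integrableOn_Ioi_rpow_of_lt (by linarith) ht
  · refine (ae_restrict_iff' measurableSet_Ioi).2 (Eventually.of_forall fun u hu => ?_)
    exact Real.rpow_nonneg (ht.trans hu).le _

lemma wgt_rpow {q : ℝ≥0∞} (hq0 : 0 < q) (hq : q ≠ ∞) {u : ℝ} (hu : 0 < u) (x : ℝ≥0∞) :
    (ENNReal.ofReal (u ^ (-(q⁻¹.toReal))) * x) ^ q.toReal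
      = ENNReal.ofReal (u⁻¹) * x ^ q.toReal := by
  rw [ENNReal.mul_rpow_of_nonneg _ _ ENNReal.toReal_nonneg,
    ENNReal.ofReal_rpow_of_pos (Real.rpow_pos_of_pos hu _), ← Real.rpow_mul hu.le]
  congr 2
  rw [neg_mul, mul_comm, toReal_inv_mul hq0 hq, Real.rpow_neg_one]

lemma Nq_pow_zero {q : ℝ≥0∞} (hq0 : 0 < q) {ε : ℝ} (hε : 0 < ε) :
    ∃ C : ℝ, 0 < C ∧ ∀ t : ℝ, 0 < t →
      Nq q (Ioc 0 t) (fun u => ENNReal.ofReal (u ^ ε)) ≤ ENNReal.ofReal (C * t ^ ε) := by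
  by_cases hq : q = ∞
  · refine ⟨1, one_pos, fun t ht => ?_⟩
    unfold Nq LqNorm
    rw [if_pos hq]
    refine essSup_le_of_ae_le _ ?_
    refine (ae_restrict_iff' measurableSet_Ioc).2 (Eventually.of_forall fun u hu => ?_)
    simp only [hq, ENNReal.inv_top, ENNReal.toReal_zero, neg_zero, Real.rpow_zero,
      ENNReal.ofReal_one, one_mul]
    exact ENNReal.ofReal_le_ofReal (Real.rpow_le_rpow hu.1.le hu.2 hε.le)
  · have hp : 0 < q.toReal := ENNReal.toReal_pos hq0.ne' hq
    refine ⟨(1 / (ε * q.toReal)) ^ q⁻¹.toReal, by positivity, fun t ht => ?_⟩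
    unfold Nq LqNorm
    rw [if_neg hq]
    have : ∫⁻ u in Ioc 0 t, (ENNReal.ofReal (u ^ (-(q⁻¹.toReal))) * ENNReal.ofReal (u ^ ε)) ^ q.toReal
        = ∫⁻ u in Ioc 0 t, ENNReal.ofReal (u ^ (ε * q.toReal - 1)) := by
      apply setLIntegral_congr_fun measurableSet_Ioc
      intro u hu
      simp only
      rw [wgt_rpow hq0 hq hu.1, ENNReal.ofReal_rpow_of_pos (Real.rpow_pos_of_pos hu.1 _),
        ← ENNReal.ofReal_mul (by have := hu.1; positivity), ← Real.rpow_mul hu.1.le,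
        Real.rpow_sub_one hu.1.ne']
      congr 1
      ring
    rw [this, lint_pow_zero (by positivity) ht, ENNReal.ofReal_rpow_of_pos (by positivity)]
    apply ENNReal.ofReal_le_ofReal
    apply le_of_eq
    rw [div_eq_mul_one_div, Real.mul_rpow (by positivity) (by positivity), ← Real.rpow_mul ht.le,
      mul_assoc, toReal_inv_mul hq0 hq, mul_one]
    ring

lemma Nq_pow_top {q : ℝ≥0∞} (hq0 : 0 < q) {ε : ℝ} (hε : 0 < ε) :
    ∃ C : ℝ, 0 < C ∧ ∀ t : ℝ, 0 < t →
      Nq q (Ioi t) (fun u => ENNReal.ofReal (u ^ (-ε))) ≤ ENNReal.ofReal (C * t ^ (-ε)) := by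
  by_cases hq : q = ∞
  · refine ⟨1, one_pos, fun t ht => ?_⟩
    unfold Nq LqNorm
    rw [if_pos hq]
    refine essSup_le_of_ae_le _ ?_
    refine (ae_restrict_iff' measurableSet_Ioi).2 (Eventually.of_forall fun u hu => ?_)
    simp only [hq, ENNReal.inv_top, ENNReal.toReal_zero, neg_zero, Real.rpow_zero,
      ENNReal.ofReal_one, one_mul]
    exact ENNReal.ofReal_le_ofReal (Real.rpow_le_rpow_of_nonpos ht (le_of_lt hu) (by linarith))
  · have hp : 0 < q.toReal := ENNReal.toReal_pos hq0.ne' hq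
    refine ⟨(1 / (ε * q.toReal)) ^ q⁻¹.toReal, by positivity, fun t ht => ?_⟩
    unfold Nq LqNorm
    rw [if_neg hq]
    have : ∫⁻ u in Ioi t, (ENNReal.ofReal (u ^ (-(q⁻¹.toReal))) * ENNReal.ofReal (u ^ (-ε))) ^ q.toReal
        = ∫⁻ u in Ioi t, ENNReal.ofReal (u ^ (-(ε * q.toReal) - 1)) := by
      apply setLIntegral_congr_fun measurableSet_Ioi
      intro u hu
      have hu0 : 0 < u := ht.trans hu
      simp only
      rw [wgt_rpow hq0 hq hu0, ENNReal.ofReal_rpow_of_pos (Real.rpow_pos_of_pos hu0 _),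
        ← ENNReal.ofReal_mul (by positivity), ← Real.rpow_mul hu0.le,
        Real.rpow_sub_one hu0.ne']
      congr 1
      rw [neg_mul]
      ring
    rw [this, lint_pow_top (by positivity) ht, ENNReal.ofReal_rpow_of_pos (by positivity)]
    apply ENNReal.ofReal_le_ofReal
    apply le_of_eq
    rw [div_eq_mul_one_div, Real.mul_rpow (by positivity) (by positivity), ← Real.rpow_mul ht.le,
      ← neg_mul, mul_assoc, toReal_inv_mul hq0 hq, mul_one]
    ring

lemma lint_inv_low {x : ℝ} (hx : 0 < x) :
    ENNReal.ofReal (1 / 2) ≤ ∫⁻ u in Ioo x (2 * x), ENNReal.ofReal (u⁻¹) := by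
  calc ENNReal.ofReal (1 / 2) = ∫⁻ u in Ioo x (2 * x), ENNReal.ofReal ((2 * x)⁻¹) := by
        rw [setLIntegral_const, Real.volume_Ioo, ← ENNReal.ofReal_mul (by positivity)]
        congr 1
        field_simp
        ring
    _ ≤ _ := by
        apply setLIntegral_mono' measurableSet_Ioo
        intro u hu
        apply ENNReal.ofReal_le_ofReal
        have := hu.1
        gcongr
        · linarith
        · exact hu.2.le

lemma Nq_low {q : ℝ≥0∞} (hq0 : 0 < q) :
    ∃ c : ℝ, 0 < c ∧ ∀ (x : ℝ), 0 < x → ∀ (A : ℝ≥0∞) (F : ℝ → ℝ≥0∞),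
      (∀ u ∈ Ioo x (2 * x), A ≤ F u) → ENNReal.ofReal c * A ≤ Nq q (Ioo x (2 * x)) F := by
  suffices H : ∃ c : ℝ, 0 < c ∧ ∀ (x : ℝ), 0 < x →
      ENNReal.ofReal c ≤ Nq q (Ioo x (2 * x)) (fun _ => 1) by
    obtain ⟨c, hc, h⟩ := H
    refine ⟨c, hc, fun x hx A F hF => ?_⟩
    calc ENNReal.ofReal c * A ≤ A * Nq q (Ioo x (2 * x)) (fun _ => 1) := by
          rw [mul_comm]; gcongr; exact h x hx
      _ ≤ _ := Nq_const_mul_le hq0 _ _ _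
      _ ≤ _ := Nq_mono measurableSet_Ioo (by simpa using hF)
  by_cases hq : q = ∞
  · refine ⟨1, one_pos, fun x hx => ?_⟩
    unfold Nq LqNorm
    rw [if_pos hq]
    simp only [hq, ENNReal.inv_top, ENNReal.toReal_zero, neg_zero, Real.rpow_zero,
      ENNReal.ofReal_one, one_mul]
    rw [essSup_const]
    rw [Ne, Measure.restrict_eq_zero, Real.volume_Ioo]
    simp; linarith
  · refine ⟨(1 / 2) ^ q⁻¹.toReal, by positivity, fun x hx => ?_⟩
    unfold Nq LqNorm
    rw [if_neg hq, ← ENNReal.ofReal_rpow_of_pos (by norm_num)]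
    apply ENNReal.rpow_le_rpow _ ENNReal.toReal_nonneg
    refine (lint_inv_low hx).trans ?_
    apply setLIntegral_mono' measurableSet_Ioo
    intro u hu
    rw [wgt_rpow hq0 hq (hx.trans hu.1)]
    simp


/-- Two-sided Potter-type bounds. -/
def Pot (b : ℝ → ℝ) : Prop :=
  (∀ t, 0 < t → 0 < b t) ∧ ∀ ε : ℝ, 0 < ε → ∃ C : ℝ, 1 ≤ C ∧ ∀ s t, 0 < s → s ≤ t →
    b t ≤ C * (t / s) ^ ε * b s ∧ b s ≤ C * (t / s) ^ ε * b t

lemma pot_of_sv {b : ℝ → ℝ} (h : SlowlyVarying b) : Pot b := by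
  obtain ⟨-, hpos, h⟩ := h
  refine ⟨fun t ht => hpos t ht, fun ε hε => ?_⟩
  obtain ⟨⟨g, hg, C, hC, hCg⟩, ⟨g', hg', C', hC', hCg'⟩⟩ := h ε hε
  refine ⟨max 1 (max (C ^ 2) (C' ^ 2)), le_max_left _ _, fun s t hs hst => ?_⟩
  have ht : 0 < t := hs.trans_le hst
  have hbs := hpos s hs
  have hbt := hpos t ht
  have hse : 0 < s ^ ε := Real.rpow_pos_of_pos hs _
  have hte : 0 < t ^ ε := Real.rpow_pos_of_pos ht _
  rw [Real.div_rpow ht.le hs.le]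
  constructor
  · have h1 := (hCg' t ht).2
    have h2 := (hCg' s hs).1
    have h3 := hg' hs ht hst
    simp only [Real.rpow_neg hs.le, Real.rpow_neg ht.le] at h1 h2
    have h4 : g' s ≤ C' * ((s ^ ε)⁻¹ * b s) := by
      rwa [inv_mul_le_iff₀ hC'] at h2
    have h5 : (t ^ ε)⁻¹ * b t ≤ C' ^ 2 * ((s ^ ε)⁻¹ * b s) := by
      calc _ ≤ C' * g' t := h1
        _ ≤ C' * (C' * ((s ^ ε)⁻¹ * b s)) := by gcongr; exact h3.trans h4
        _ = _ := by ring
    have h6 : b t ≤ C' ^ 2 * (t ^ ε / s ^ ε) * b s := by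
      rw [inv_mul_le_iff₀ hte] at h5
      refine h5.trans (le_of_eq ?_)
      field_simp
    refine h6.trans ?_
    gcongr
    exact (le_max_right _ _).trans (le_max_right _ _)
  · have h1 := (hCg s hs).2
    have h2 := (hCg t ht).1
    have h3 := hg hs ht hst
    have h4 : g t ≤ C * (t ^ ε * b t) := by
      rwa [inv_mul_le_iff₀ hC] at h2
    have h5 : s ^ ε * b s ≤ C ^ 2 * (t ^ ε * b t) := by
      calc _ ≤ C * g s := h1
        _ ≤ C * (C * (t ^ ε * b t)) := by gcongr; exact h3.trans h4
        _ = _ := by ring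
    have h6 : b s ≤ C ^ 2 * (t ^ ε / s ^ ε) * b t := by
      rw [mul_comm, ← le_div_iff₀ hse] at h5
      refine h5.trans (le_of_eq ?_)
      field_simp
    refine h6.trans ?_
    gcongr
    exact (le_max_left _ _).trans (le_max_right _ _)

lemma pot_div {a b : ℝ → ℝ} (ha : Pot a) (hb : Pot b) : Pot (fun s => a s / b s) := by
  refine ⟨fun t ht => div_pos (ha.1 t ht) (hb.1 t ht), fun ε hε => ?_⟩
  obtain ⟨C, hC, h⟩ := ha.2 (ε / 2) (by linarith)
  obtain ⟨D, hD, k⟩ := hb.2 (ε / 2) (by linarith)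
  refine ⟨C * D, one_le_mul_of_one_le_of_one_le hC hD, fun s t hs hst => ?_⟩
  have ht : 0 < t := hs.trans_le hst
  have hr : 0 < t / s := div_pos ht hs
  have e : (t / s) ^ ε = (t / s) ^ (ε / 2) * (t / s) ^ (ε / 2) := by
    rw [← Real.rpow_add hr]; congr 1; ring
  have hp := Real.rpow_pos_of_pos hr (ε / 2)
  have as := ha.1 s hs
  have at' := ha.1 t ht
  have bs := hb.1 s hs
  have bt := hb.1 t ht
  obtain ⟨h1, h2⟩ := h s t hs hst
  obtain ⟨k1, k2⟩ := k s t hs hst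
  rw [e]
  constructor
  · simp only
    rw [div_le_iff₀ bt]
    calc a t ≤ C * (t / s) ^ (ε / 2) * a s := h1
      _ = C * (t / s) ^ (ε / 2) * (a s / b s) * b s := by field_simp
      _ ≤ C * (t / s) ^ (ε / 2) * (a s / b s) * (D * (t / s) ^ (ε / 2) * b t) := by gcongr
      _ = _ := by ring
  · simp only
    rw [div_le_iff₀ bs]
    calc a s ≤ C * (t / s) ^ (ε / 2) * a t := h2
      _ = C * (t / s) ^ (ε / 2) * (a t / b t) * b t := by field_simp
      _ ≤ C * (t / s) ^ (ε / 2) * (a t / b t) * (D * (t / s) ^ (ε / 2) * b s) := by gcongr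
      _ = _ := by ring

/-- tail norm -/
def tailB (q : ℝ≥0∞) (β : ℝ → ℝ) (t : ℝ) : ℝ≥0∞ := Nq q (Ioi t) (fun s => ENNReal.ofReal (β s))

lemma LqNorm_svWgt (q : ℝ≥0∞) (β : ℝ → ℝ) {t : ℝ} (ht : 0 < t) :
    LqNorm q (Ioi t) (svWgt q β) = tailB q β t := by
  apply le_antisymm
  · apply LqNorm_mono measurableSet_Ioi
    intro u hu
    have hu0 : 0 < u := ht.trans hu
    unfold svWgt
    rw [ENNReal.ofReal_mul (by positivity)]
  · apply LqNorm_mono measurableSet_Ioi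
    intro u hu
    have hu0 : 0 < u := ht.trans hu
    unfold svWgt
    rw [ENNReal.ofReal_mul (by positivity)]

lemma tailB_anti (q : ℝ≥0∞) (β : ℝ → ℝ) {s t : ℝ} (h : s ≤ t) : tailB q β t ≤ tailB q β s :=
  Nq_mono_set (Ioi_subset_Ioi h) _

lemma tailB_ge {q : ℝ≥0∞} (hq : 0 < q) {β : ℝ → ℝ} (hβ : Pot β) :
    ∃ C : ℝ, 0 < C ∧ ∀ t, 0 < t → ENNReal.ofReal (β t) ≤ ENNReal.ofReal C * tailB q β t := by
  obtain ⟨c, hc, h⟩ := Nq_low hq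
  obtain ⟨D, hD, k⟩ := hβ.2 1 one_pos
  have hD0 : 0 < D := by linarith
  refine ⟨c⁻¹ * (D * 2), by positivity, fun t ht => ?_⟩
  have h1 := h t ht (ENNReal.ofReal ((D * 2)⁻¹ * β t)) (fun s => ENNReal.ofReal (β s)) (by
    intro u hu
    apply ENNReal.ofReal_le_ofReal
    rw [inv_mul_le_iff₀ (by positivity)]
    have h2 := (k t u ht hu.1.le).2
    refine h2.trans ?_
    have := hβ.1 u (ht.trans hu.1)
    gcongr
    rw [Real.rpow_one, div_le_iff₀ ht]
    exact hu.2.le)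
  have h2 : ENNReal.ofReal c * ENNReal.ofReal ((D * 2)⁻¹ * β t) ≤ tailB q β t :=
    h1.trans (Nq_mono_set Ioo_subset_Ioi_self _)
  calc ENNReal.ofReal (β t)
      = ENNReal.ofReal (c⁻¹ * (D * 2)) * (ENNReal.ofReal c * ENNReal.ofReal ((D * 2)⁻¹ * β t)) := by
        rw [← ENNReal.ofReal_mul hc.le, ← ENNReal.ofReal_mul (by positivity)]
        congr 1
        field_simp
    _ ≤ _ := by gcongr

lemma tailB_le {q : ℝ≥0∞} (hq : 0 < q) {β : ℝ → ℝ} (hβ : Pot β) {l : ℝ} (hl : 0 < l) :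
    ∃ C : ℝ, 0 < C ∧ ∀ s t, 0 < s → s ≤ t →
      tailB q β s ≤ ENNReal.ofReal (C * (t / s) ^ l) * tailB q β t := by
  obtain ⟨C1, hC1, h1⟩ := Nq_union q
  obtain ⟨C2, hC2, h2⟩ := Nq_pow_top hq hl
  obtain ⟨C3, hC3, h3⟩ := tailB_ge hq hβ
  obtain ⟨D, hD, k⟩ := hβ.2 l hl
  have hD0 : 0 < D := by linarith
  refine ⟨C1 * (D * C2 * C3 + 1), by positivity, fun s t hs hst => ?_⟩
  have ht : 0 < t := hs.trans_le hst
  have hbt := hβ.1 t ht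
  have e1 : Nq q (Ioc s t) (fun s => ENNReal.ofReal (β s)) ≤
      ENNReal.ofReal (D * C2 * C3 * (t / s) ^ l) * tailB q β t := by
    calc _ ≤ Nq q (Ioc s t) (fun u => ENNReal.ofReal (D * t ^ l * β t) * ENNReal.ofReal (u ^ (-l))) := by
          apply Nq_mono measurableSet_Ioc
          intro u hu
          have hu0 := hs.trans hu.1
          rw [← ENNReal.ofReal_mul (by positivity)]
          apply ENNReal.ofReal_le_ofReal
          refine (k u t hu0 hu.2).2.trans (le_of_eq ?_)
          rw [Real.div_rpow ht.le hu0.le, Real.rpow_neg hu0.le]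
          field_simp
      _ ≤ Nq q (Ioi s) (fun u => ENNReal.ofReal (D * t ^ l * β t) * ENNReal.ofReal (u ^ (-l))) :=
          Nq_mono_set Ioc_subset_Ioi_self _
      _ ≤ ENNReal.ofReal (D * t ^ l * β t) * ENNReal.ofReal (C2 * s ^ (-l)) := by
          refine (Nq_le_const_mul hq _ ENNReal.ofReal_ne_top _).trans ?_
          gcongr
          exact h2 s hs
      _ = ENNReal.ofReal (D * C2 * (t / s) ^ l) * ENNReal.ofReal (β t) := by
          rw [← ENNReal.ofReal_mul (by positivity), ← ENNReal.ofReal_mul (by positivity)]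
          congr 1
          rw [Real.div_rpow ht.le hs.le, Real.rpow_neg hs.le]
          field_simp
      _ ≤ ENNReal.ofReal (D * C2 * (t / s) ^ l) * (ENNReal.ofReal C3 * tailB q β t) := by
          gcongr
          exact h3 t ht
      _ = _ := by
          rw [← mul_assoc, ← ENNReal.ofReal_mul (by positivity)]
          congr 2
          ring
  have hge : (1:ℝ) ≤ (t / s) ^ l := Real.one_le_rpow ((one_le_div hs).2 hst) hl.le
  calc tailB q β s ≤ ENNReal.ofReal C1 * (Nq q (Ioc s t) (fun s => ENNReal.ofReal (β s)) + tailB q β t) := by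
        unfold tailB
        rw [← Ioc_union_Ioi_eq_Ioi hst]
        exact h1 _ _ _
    _ ≤ ENNReal.ofReal C1 * (ENNReal.ofReal (D * C2 * C3 * (t / s) ^ l) * tailB q β t
          + ENNReal.ofReal ((t / s) ^ l) * tailB q β t) := by
        gcongr
        calc tailB q β t = 1 * tailB q β t := (one_mul _).symm
          _ ≤ _ := by
            gcongr
            rwa [ENNReal.one_le_ofReal]
    _ = _ := by
        rw [← add_mul, ← mul_assoc, ← ENNReal.ofReal_add (by positivity) (by positivity),
          ← ENNReal.ofReal_mul (by positivity)]
        congr 2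
        ring

/-- Data about the tail function, in real terms. -/
lemma tail_facts {q : ℝ≥0∞} (hq : 0 < q) {β : ℝ → ℝ} (hβ : Pot β)
    (hfin : tailB q β 1 ≠ ∞) {B : ℝ → ℝ} (hB : ∀ t, B t = (tailB q β t).toReal) :
    (∀ t, 0 < t → tailB q β t = ENNReal.ofReal (B t)) ∧ (∀ t, 0 < t → 0 < B t) ∧
    (∀ s t, 0 < s → s ≤ t → B t ≤ B s) ∧
    (∃ C : ℝ, 0 < C ∧ ∀ t, 0 < t → β t ≤ C * B t) ∧
    (∀ l : ℝ, 0 < l → ∃ C : ℝ, 0 < C ∧ ∀ s t, 0 < s → s ≤ t → B s ≤ C * (t / s) ^ l * B t) := by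
  have hne : ∀ t, 0 < t → tailB q β t ≠ ∞ := by
    intro t ht
    rcases le_total t 1 with h | h
    · obtain ⟨C, hC, hh⟩ := tailB_le hq hβ one_pos
      exact ne_top_of_le_ne_top (ENNReal.mul_ne_top ENNReal.ofReal_ne_top hfin) (hh t 1 ht h)
    · exact ne_top_of_le_ne_top hfin (tailB_anti q β h)
  have heq : ∀ t, 0 < t → tailB q β t = ENNReal.ofReal (B t) := by
    intro t ht
    rw [hB, ENNReal.ofReal_toReal (hne t ht)]
  have hB0 : ∀ t, 0 ≤ B t := fun t => by rw [hB]; exact ENNReal.toReal_nonneg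
  have hge : ∃ C : ℝ, 0 < C ∧ ∀ t, 0 < t → β t ≤ C * B t := by
    obtain ⟨C, hC, h⟩ := tailB_ge hq hβ
    refine ⟨C, hC, fun t ht => ?_⟩
    have := h t ht
    rw [heq t ht, ← ENNReal.ofReal_mul hC.le] at this
    exact (ENNReal.ofReal_le_ofReal_iff (mul_nonneg hC.le (hB0 t))).1 this
  refine ⟨heq, ?_, ?_, hge, ?_⟩
  · intro t ht
    obtain ⟨C, hC, h⟩ := hge
    have := (hβ.1 t ht).trans_le (h t ht)
    exact pos_of_mul_pos_right this hC.le
  · intro s t hs hst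
    have := tailB_anti q β hst
    rw [heq t (hs.trans_le hst), heq s hs] at this
    exact (ENNReal.ofReal_le_ofReal_iff (hB0 s)).1 this
  · intro l hl
    obtain ⟨C, hC, h⟩ := tailB_le hq hβ hl
    refine ⟨C, hC, fun s t hs hst => ?_⟩
    have ht := hs.trans_le hst
    have := h s t hs hst
    rw [heq t ht, heq s hs, ← ENNReal.ofReal_mul (by positivity)] at this
    exact (ENNReal.ofReal_le_ofReal_iff (mul_nonneg (by positivity) (hB0 t))).1 this

/-- Power-type growth of `ρ`. -/
def Grow (α : ℝ) (ρ : ℝ → ℝ) : Prop :=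
  (∀ t, 0 < t → 0 < ρ t) ∧ ∃ C : ℝ, 1 ≤ C ∧ ∀ s t, 0 < s → s ≤ t →
    ρ t ≤ C * (t / s) * ρ s ∧ ρ s ≤ C * (s / t) ^ α * ρ t

lemma grow_rho {a₀ B ρ : ℝ → ℝ} {θ₀ : ℝ} (hθ₀ : 0 < θ₀) (hθ₀' : θ₀ < 1) (ha : Pot a₀)
    (hBpos : ∀ t, 0 < t → 0 < B t) (hBanti : ∀ s t, 0 < s → s ≤ t → B t ≤ B s)
    (hBle : ∀ l : ℝ, 0 < l → ∃ C : ℝ, 0 < C ∧ ∀ s t, 0 < s → s ≤ t → B s ≤ C * (t / s) ^ l * B t)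
    (hρ : ∀ t, ρ t = t ^ (1 - θ₀) * (a₀ t * B t)) : Grow ((1 - θ₀) / 2) ρ := by
  have hpos : ∀ t, 0 < t → 0 < ρ t := by
    intro t ht
    have := hBpos t ht
    have := ha.1 t ht
    rw [hρ]; positivity
  refine ⟨hpos, ?_⟩
  obtain ⟨C1, hC1, h1⟩ := ha.2 θ₀ hθ₀
  obtain ⟨C2, hC2, h2⟩ := ha.2 ((1 - θ₀) / 4) (by linarith)
  obtain ⟨C3, hC3, h3⟩ := hBle ((1 - θ₀) / 4) (by linarith)
  refine ⟨max C1 (C2 * C3), le_max_of_le_left hC1, fun s t hs hst => ?_⟩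
  have ht := hs.trans_le hst
  have hr : 0 < t / s := div_pos ht hs
  have := hBpos s hs
  have := hBpos t ht
  have := ha.1 s hs
  have := ha.1 t ht
  have := hpos s hs
  have := hpos t ht
  constructor
  · calc ρ t = t ^ (1 - θ₀) * (a₀ t * B t) := hρ t
      _ ≤ t ^ (1 - θ₀) * ((C1 * (t / s) ^ θ₀ * a₀ s) * B s) := by
          gcongr
          · exact (h1 s t hs hst).1
          · exact hBanti s t hs hst
      _ = C1 * ((t / s) ^ (1 - θ₀) * (t / s) ^ θ₀) * (s ^ (1 - θ₀) * (a₀ s * B s)) := by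
          rw [Real.div_rpow ht.le hs.le (1 - θ₀)]
          field_simp
      _ = C1 * (t / s) * ρ s := by
          rw [← Real.rpow_add hr, hρ s]
          simp
      _ ≤ _ := by gcongr; exact le_max_left _ _
  · have e : (s / t) ^ ((1 - θ₀) / 2) = (s / t) ^ (1 - θ₀) * (t / s) ^ ((1 - θ₀) / 4) * (t / s) ^ ((1 - θ₀) / 4) := by
      rw [← inv_div s t, Real.inv_rpow (by positivity), ← Real.rpow_neg (by positivity),
        ← Real.rpow_add (by positivity), ← Real.rpow_add (by positivity)]
      congr 1
      ring
    calc ρ s = s ^ (1 - θ₀) * (a₀ s * B s) := hρ s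
      _ ≤ s ^ (1 - θ₀) * ((C2 * (t / s) ^ ((1 - θ₀) / 4) * a₀ t) * (C3 * (t / s) ^ ((1 - θ₀) / 4) * B t)) := by
          gcongr
          · exact (h2 s t hs hst).2
          · exact h3 s t hs hst
      _ = C2 * C3 * (s / t) ^ ((1 - θ₀) / 2) * ρ t := by
          rw [e, hρ t, Real.div_rpow hs.le ht.le (1 - θ₀)]
          field_simp
      _ ≤ _ := by gcongr; exact le_max_right _ _


lemma LqNorm_congr {q : ℝ≥0∞} {s : Set ℝ} (hs : MeasurableSet s) {F G : ℝ → ℝ≥0∞}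
    (h : ∀ u ∈ s, F u = G u) : LqNorm q s F = LqNorm q s G :=
  le_antisymm (LqNorm_mono hs fun u hu => (h u hu).le) (LqNorm_mono hs fun u hu => (h u hu).ge)

lemma wgt_split {q : ℝ≥0∞} {u σ x : ℝ} (hu : 0 < u) (K : ℝ≥0∞) :
    ENNReal.ofReal (u ^ (-σ - q⁻¹.toReal) * x) * K =
      ENNReal.ofReal (u ^ (-(q⁻¹.toReal))) * (ENNReal.ofReal (u ^ (-σ) * x) * K) := by
  rw [← mul_assoc, ← ENNReal.ofReal_mul (by positivity), ← mul_assoc, ← Real.rpow_add hu]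
  congr 4
  ring

lemma normK_eq (N₀ N₁ : E → ℝ≥0∞) (θ : ℝ) (q : ℝ≥0∞) (b : ℝ → ℝ) (f : E) :
    normK N₀ N₁ θ q b f =
      Nq q (Ioi 0) (fun u => ENNReal.ofReal (u ^ (-θ) * b u) * Kf N₀ N₁ u f) :=
  LqNorm_congr measurableSet_Ioi fun _ hu => wgt_split hu _

lemma normL_eq (N₀ N₁ : E → ℝ≥0∞) (σ : ℝ) (r q : ℝ≥0∞) (b a : ℝ → ℝ) (f : E) :
    normL N₀ N₁ σ r q b a f =
      Nq r (Ioi 0) (fun t => ENNReal.ofReal (b t / a t) *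
        Nq q (Ioo 0 t) (fun u => ENNReal.ofReal (u ^ (-σ) * a u) * Kf N₀ N₁ u f)) := by
  apply LqNorm_congr measurableSet_Ioi
  intro t ht
  have ht : (0:ℝ) < t := ht
  rw [← mul_assoc, ← ENNReal.ofReal_mul (by positivity)]
  congr 1
  exact LqNorm_congr measurableSet_Ioo fun u hu => wgt_split hu.1 _

lemma Kf_mono (N₀ N₁ : E → ℝ≥0∞) (f : E) {s t : ℝ} (h : s ≤ t) :
    Kf N₀ N₁ s f ≤ Kf N₀ N₁ t f := by
  unfold Kf
  gcongr

lemma Kf_quasi (N₀ N₁ : E → ℝ≥0∞) (f : E) {s t : ℝ} (hs : 0 < s) (h : s ≤ t) :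
    Kf N₀ N₁ t f ≤ ENNReal.ofReal (t / s) * Kf N₀ N₁ s f := by
  unfold Kf
  rw [ENNReal.mul_iInf_of_ne (by simp; exact div_pos (hs.trans_le h) hs) ENNReal.ofReal_ne_top]
  apply iInf_mono
  intro g
  have ht := hs.trans_le h
  rw [mul_add, ← mul_assoc, ← ENNReal.ofReal_mul (by positivity), div_mul_cancel₀ _ hs.ne']
  gcongr
  calc N₀ g = 1 * N₀ g := (one_mul _).symm
    _ ≤ _ := by
      gcongr
      rw [ENNReal.one_le_ofReal]
      exact (one_le_div hs).2 h

lemma Kf_le_N₀ (N₀ : E → ℝ≥0∞) (A₁ : QuasiBanach E) (g : E) (s : ℝ) :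
    Kf N₀ A₁.N s g ≤ N₀ g := by
  unfold Kf
  refine (iInf_le _ g).trans ?_
  simp [A₁.zero]

lemma qb_neg (A : QuasiBanach E) (x : E) : A.N (-x) = A.N x := by
  have := A.smul (-1) x
  simpa using this

lemma qb_quasi (A : QuasiBanach E) : ∃ C : ℝ, 1 ≤ C ∧
    ∀ x y, A.N (x + y) ≤ ENNReal.ofReal C * (A.N x + A.N y) := by
  obtain ⟨C, h1, h2, h⟩ := A.quasi
  refine ⟨C.toReal, ?_, ?_⟩
  · rw [← ENNReal.toReal_one]
    exact ENNReal.toReal_mono h2 h1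
  · rwa [ENNReal.ofReal_toReal h2]

lemma Kf_tri (A₁ : QuasiBanach E) : ∃ C : ℝ, 1 ≤ C ∧ ∀ (N₀ : E → ℝ≥0∞) (s : ℝ) (f g : E),
    Kf N₀ A₁.N s g ≤ ENNReal.ofReal C * (Kf N₀ A₁.N s f + ENNReal.ofReal s * A₁.N (g - f)) := by
  obtain ⟨C, hC, h⟩ := qb_quasi A₁
  refine ⟨C, hC, fun N₀ s f g => ?_⟩
  unfold Kf
  have hC' : (1:ℝ≥0∞) ≤ ENNReal.ofReal C := by rwa [ENNReal.one_le_ofReal]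
  rw [ENNReal.iInf_add, ENNReal.mul_iInf_of_ne (by simp; linarith) ENNReal.ofReal_ne_top]
  apply iInf_mono
  intro x
  have e : g - x = (f - x) + (g - f) := by abel
  rw [e]
  calc N₀ x + ENNReal.ofReal s * A₁.N ((f - x) + (g - f))
      ≤ ENNReal.ofReal C * N₀ x +
          ENNReal.ofReal s * (ENNReal.ofReal C * (A₁.N (f - x) + A₁.N (g - f))) := by
        gcongr
        · calc N₀ x = 1 * N₀ x := (one_mul _).symm
            _ ≤ _ := by gcongr
        · exact h _ _
    _ = _ := by ring

/-- Step A. -/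
lemma stepA {A₁ : QuasiBanach E} {N₀ : E → ℝ≥0∞}
    {θ₀ : ℝ} (hθ₀ : 0 < θ₀) {q₀ r₀ : ℝ≥0∞} (hq₀ : 0 < q₀) (hr₀ : 0 < r₀)
    {a₀ b₀ B ρ : ℝ → ℝ} (ha : Pot a₀)
    (hBpos : ∀ t, 0 < t → 0 < B t)
    (hB : ∀ t, 0 < t → tailB r₀ (fun s => b₀ s / a₀ s) t = ENNReal.ofReal (B t))
    (hρ : ∀ t, ρ t = t ^ (1 - θ₀) * (a₀ t * B t)) :
    ∃ C : ℝ, 0 < C ∧ ∀ (f : E) (t : ℝ), 0 < t →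
      ENNReal.ofReal (ρ t / t) * Kf N₀ A₁.N t f ≤
        ENNReal.ofReal C * Kf (normL N₀ A₁.N θ₀ r₀ q₀ b₀ a₀) A₁.N (ρ t) f := by
  obtain ⟨c, hc, hlow⟩ := Nq_low hq₀
  obtain ⟨D, hD, hDa⟩ := ha.2 1 one_pos
  obtain ⟨C₁, hC₁, htri⟩ := Kf_tri A₁
  have hD0 : 0 < D := by linarith
  -- the bound for an element of the first space
  have key : ∀ (g : E) (t : ℝ), 0 < t → ENNReal.ofReal (ρ t / t) * Kf N₀ A₁.N t g ≤
      ENNReal.ofReal (c⁻¹ * (4 * D)) * normL N₀ A₁.N θ₀ r₀ q₀ b₀ a₀ g := by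
    intro g t ht
    have hat := ha.1 t ht
    have hBt := hBpos t ht
    have h1 : ENNReal.ofReal c * (ENNReal.ofReal ((4 * D)⁻¹ * (t ^ (-θ₀) * a₀ t)) * Kf N₀ A₁.N t g) ≤
        Nq q₀ (Ioo 0 t) (fun u => ENNReal.ofReal (u ^ (-θ₀) * a₀ u) * Kf N₀ A₁.N u g) := by
      have := hlow (t / 2) (by positivity)
        (ENNReal.ofReal ((4 * D)⁻¹ * (t ^ (-θ₀) * a₀ t)) * Kf N₀ A₁.N t g)
        (fun u => ENNReal.ofReal (u ^ (-θ₀) * a₀ u) * Kf N₀ A₁.N u g) (by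
          intro u hu
          have hu1 := hu.1
          have hu2 : u < t := by linarith [hu.2]
          have hu0 : 0 < u := by linarith
          have hau := ha.1 u hu0
          calc _ ≤ ENNReal.ofReal ((4 * D)⁻¹ * (t ^ (-θ₀) * a₀ t)) *
                (ENNReal.ofReal (t / u) * Kf N₀ A₁.N u g) := by
                gcongr
                exact Kf_quasi _ _ _ hu0 hu2.le
            _ ≤ ENNReal.ofReal ((4 * D)⁻¹ * (u ^ (-θ₀) * (D * (t / u) ^ (1:ℝ) * a₀ u))) *
                (ENNReal.ofReal 2 * Kf N₀ A₁.N u g) := by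
                gcongr ENNReal.ofReal (_ * (?_ * ?_)) * (ENNReal.ofReal ?_ * _)
                · exact Real.rpow_le_rpow_of_nonpos hu0 hu2.le (by linarith)
                · exact (hDa u t hu0 hu2.le).1
                · rw [div_le_iff₀ hu0]; linarith
            _ ≤ ENNReal.ofReal ((4 * D)⁻¹ * (u ^ (-θ₀) * (D * 2 * a₀ u))) *
                (ENNReal.ofReal 2 * Kf N₀ A₁.N u g) := by
                gcongr
                rw [Real.rpow_one, div_le_iff₀ hu0]; linarith
            _ = _ := by
                rw [← mul_assoc, ← ENNReal.ofReal_mul (by positivity)]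
                congr 2
                field_simp
                ring)
      refine this.trans (Nq_mono_set ?_ _)
      intro u hu
      exact ⟨by have := hu.1; linarith, by have := hu.2; linarith⟩
    rw [normL_eq]
    set I := Nq q₀ (Ioo 0 t) (fun u => ENNReal.ofReal (u ^ (-θ₀) * a₀ u) * Kf N₀ A₁.N u g) with hI
    have h2 : I * ENNReal.ofReal (B t) ≤ Nq r₀ (Ioi 0) (fun t => ENNReal.ofReal (b₀ t / a₀ t) *
        Nq q₀ (Ioo 0 t) (fun u => ENNReal.ofReal (u ^ (-θ₀) * a₀ u) * Kf N₀ A₁.N u g)) := by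
      rw [← hB t ht]
      refine (Nq_const_mul_le hr₀ _ _ _).trans ?_
      refine le_trans ?_ (Nq_mono_set (Ioi_subset_Ioi ht.le) _)
      apply Nq_mono measurableSet_Ioi
      intro u hu
      rw [mul_comm]
      gcongr
      exact Nq_mono_set (Ioo_subset_Ioo_right (le_of_lt hu)) _
    refine le_trans ?_ (mul_le_mul_right (le_trans (mul_le_mul_left h1 _) h2) _)
    rw [← mul_assoc (ENNReal.ofReal c), ← ENNReal.ofReal_mul hc.le, mul_right_comm,
      ← mul_assoc, ← ENNReal.ofReal_mul (by positivity), ← ENNReal.ofReal_mul (by positivity)]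
    gcongr
    apply le_of_eq
    rw [hρ, Real.rpow_sub ht, Real.rpow_neg ht.le, Real.rpow_one]
    field_simp
  refine ⟨C₁ * (c⁻¹ * (4 * D) + 1), by positivity, fun f t ht => ?_⟩
  have hat := ha.1 t ht
  have hBt := hBpos t ht
  have hρt : 0 < ρ t := by rw [hρ]; positivity
  conv_rhs => unfold Kf
  rw [ENNReal.mul_iInf_of_ne (by simp; positivity) ENNReal.ofReal_ne_top]
  apply le_iInf
  intro g
  calc _ ≤ ENNReal.ofReal (ρ t / t) * (ENNReal.ofReal C₁ *
        (Kf N₀ A₁.N t g + ENNReal.ofReal t * A₁.N (f - g))) := by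
        gcongr; exact htri _ _ _ _
    _ = ENNReal.ofReal C₁ * (ENNReal.ofReal (ρ t / t) * Kf N₀ A₁.N t g +
          ENNReal.ofReal (ρ t / t) * ENNReal.ofReal t * A₁.N (f - g)) := by ring
    _ = ENNReal.ofReal C₁ * (ENNReal.ofReal (ρ t / t) * Kf N₀ A₁.N t g +
          ENNReal.ofReal (ρ t) * A₁.N (f - g)) := by
        rw [← ENNReal.ofReal_mul (by positivity), div_mul_cancel₀ _ ht.ne']
    _ ≤ ENNReal.ofReal C₁ * (ENNReal.ofReal (c⁻¹ * (4 * D) + 1) * normL N₀ A₁.N θ₀ r₀ q₀ b₀ a₀ g +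
          ENNReal.ofReal (c⁻¹ * (4 * D) + 1) * (ENNReal.ofReal (ρ t) * A₁.N (f - g))) := by
        gcongr ENNReal.ofReal C₁ * (?_ + ?_)
        · refine (key g t ht).trans ?_
          gcongr
          linarith
        · calc _ = 1 * (ENNReal.ofReal (ρ t) * A₁.N (f - g)) := (one_mul _).symm
            _ ≤ _ := by
              gcongr
              rw [ENNReal.one_le_ofReal]
              have : 0 < c⁻¹ * (4 * D) := by positivity
              linarith
    _ = _ := by
        rw [← mul_add, ← mul_assoc, ← ENNReal.ofReal_mul (by positivity)]


lemma ofReal_rearr {x y z w : ℝ} (hx : 0 ≤ x) (hz : 0 ≤ z) (h : x * y = z * w) (S : ℝ≥0∞) :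
    ENNReal.ofReal x * (ENNReal.ofReal y * S) = (ENNReal.ofReal z * S) * ENNReal.ofReal w := by
  rw [mul_right_comm, ← ENNReal.ofReal_mul hz, ← mul_assoc, ← ENNReal.ofReal_mul hx, h]

lemma stepB_core {A₁ : QuasiBanach E} {N₀ : E → ℝ≥0∞}
    {θ₀ : ℝ} (hθ₀ : 0 < θ₀) {q₀ r₀ : ℝ≥0∞} (hq₀ : 0 < q₀) (hr₀ : 0 < r₀)
    {a₀ b₀ B ρ : ℝ → ℝ} (ha : Pot a₀)
    (hBpos : ∀ t, 0 < t → 0 < B t) (hBanti : ∀ s t, 0 < s → s ≤ t → B t ≤ B s)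
    (hB : ∀ t, 0 < t → tailB r₀ (fun s => b₀ s / a₀ s) t = ENNReal.ofReal (B t))
    (hβB : ∃ C : ℝ, 0 < C ∧ ∀ t, 0 < t → b₀ t / a₀ t ≤ C * B t)
    (hρ : ∀ t, ρ t = t ^ (1 - θ₀) * (a₀ t * B t)) {ε : ℝ} (hε : 0 < ε) :
    ∃ C : ℝ, 0 < C ∧ ∀ (k : ℝ → ℝ≥0∞),
      (∀ s t, 0 < s → s ≤ t → k t ≤ ENNReal.ofReal (t / s) * k s) →
      ∀ (f g : E) (t : ℝ), 0 < t → (∀ s, 0 < s → s ≤ t → Kf N₀ A₁.N s f ≤ k s) →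
      N₀ g + ENNReal.ofReal t * A₁.N (f - g) ≤ k t → ∀ S : ℝ≥0∞,
      (∀ u, 0 < u → u ≤ t → ENNReal.ofReal (u ^ (-1 - ε) * ρ u) * k u ≤ S) →
      normL N₀ A₁.N θ₀ r₀ q₀ b₀ a₀ g + ENNReal.ofReal (ρ t) * A₁.N (f - g) ≤
        ENNReal.ofReal (C * t ^ ε) * S := by
  obtain ⟨C₁, hC₁, htri⟩ := Kf_tri A₁
  obtain ⟨C₂, hC₂, hp0⟩ := Nq_pow_zero hq₀ hε
  obtain ⟨C₃, hC₃, hptop⟩ := Nq_pow_top hq₀ (half_pos hθ₀)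
  obtain ⟨C₄, hC₄, hp0r⟩ := Nq_pow_zero hr₀ hε
  obtain ⟨U, hU, hUq⟩ := Nq_union q₀
  obtain ⟨V, hV, hVr⟩ := Nq_union r₀
  obtain ⟨D, hD, hDa⟩ := ha.2 (θ₀ / 2) (half_pos hθ₀)
  obtain ⟨M, hM, hβ⟩ := hβB
  have hD0 : 0 < D := by linarith
  have hC₁0 : 0 < C₁ := by linarith
  set c1 : ℝ := 2 * C₁ * C₂ with hc1
  have hc10 : 0 < c1 := by positivity
  set c2 : ℝ := U * (c1 + D * C₃) with hc2
  have hc20 : 0 < c2 := by positivity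
  set c3 : ℝ := V * (M * c1 * C₄ + c2) with hc3
  have hc30 : 0 < c3 := by positivity
  refine ⟨c3 + 1, by positivity, fun k hk f g t ht hKk hg S hS => ?_⟩
  have hte : 0 < t ^ ε := Real.rpow_pos_of_pos ht _
  by_cases hStop : S = ∞
  · rw [hStop, ENNReal.mul_top (by simp; positivity)]
    exact le_top
  -- basic facts
  have hAle : ENNReal.ofReal t * A₁.N (f - g) ≤ k t := le_trans le_add_self hg
  have hN₀le : N₀ g ≤ k t := le_trans le_self_add hg
  have fk : ∀ u, 0 < u → u ≤ t →
      ENNReal.ofReal (u ^ (-θ₀) * a₀ u) * k u ≤ ENNReal.ofReal (u ^ ε / B u) * S := by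
    intro u hu hut
    have hau := ha.1 u hu
    have hBu := hBpos u hu
    calc _ = ENNReal.ofReal (u ^ ε / B u) * (ENNReal.ofReal (u ^ (-1 - ε) * ρ u) * k u) := by
          rw [← mul_assoc, ← ENNReal.ofReal_mul (by positivity)]
          congr 2
          rw [hρ, Real.rpow_sub hu, Real.rpow_sub hu, Real.rpow_neg hu.le, Real.rpow_neg hu.le,
            Real.rpow_one]
          field_simp
      _ ≤ _ := by gcongr; exact hS u hu hut
  have hKg : ∀ u, 0 < u → u ≤ t → Kf N₀ A₁.N u g ≤ ENNReal.ofReal (2 * C₁) * k u := by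
    intro u hu hut
    have e1 : ENNReal.ofReal u * A₁.N (g - f) ≤ k u := by
      rw [← neg_sub, qb_neg]
      calc _ = ENNReal.ofReal (u / t) * (ENNReal.ofReal t * A₁.N (f - g)) := by
            rw [← mul_assoc, ← ENNReal.ofReal_mul (by positivity), div_mul_cancel₀ _ ht.ne']
        _ ≤ ENNReal.ofReal (u / t) * (ENNReal.ofReal (t / u) * k u) := by
            exact mul_le_mul_right (hAle.trans (hk u t hu hut)) _
        _ = k u := by
            rw [← mul_assoc, ← ENNReal.ofReal_mul (by positivity)]
            have : u / t * (t / u) = 1 := by field_simp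
            rw [this]; simp
    calc _ ≤ _ := htri N₀ u f g
      _ ≤ ENNReal.ofReal C₁ * (k u + k u) := by
          gcongr
          exact hKk u hu hut
      _ = _ := by
          rw [← two_mul, ← mul_assoc, mul_comm 2 C₁, ENNReal.ofReal_mul hC₁0.le]
          simp
  set W : ℝ → ℝ≥0∞ := fun u => ENNReal.ofReal (u ^ (-θ₀) * a₀ u) * Kf N₀ A₁.N u g with hW
  have inner0 : ∀ s, 0 < s → s ≤ t →
      Nq q₀ (Ioc 0 s) W ≤ ENNReal.ofReal (c1 * (s ^ ε / B s)) * S := by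
    intro s hs hst
    have hBs := hBpos s hs
    calc _ ≤ Nq q₀ (Ioc 0 s) (fun u => (ENNReal.ofReal (2 * C₁ / B s) * S) * ENNReal.ofReal (u ^ ε)) := by
          apply Nq_mono measurableSet_Ioc
          intro u hu
          have hBu := hBpos u hu.1
          have hu0 := hu.1
          calc W u ≤ ENNReal.ofReal (u ^ (-θ₀) * a₀ u) * (ENNReal.ofReal (2 * C₁) * k u) := by
                simp only [hW]
                gcongr
                exact hKg u hu.1 (hu.2.trans hst)
            _ = ENNReal.ofReal (2 * C₁) * (ENNReal.ofReal (u ^ (-θ₀) * a₀ u) * k u) := by ring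
            _ ≤ ENNReal.ofReal (2 * C₁) * (ENNReal.ofReal (u ^ ε / B u) * S) := by
                exact mul_le_mul_right (fk u hu.1 (hu.2.trans hst)) _
            _ ≤ ENNReal.ofReal (2 * C₁) * (ENNReal.ofReal (u ^ ε / B s) * S) := by
                gcongr
                exact hBanti u s hu.1 hu.2
            _ = _ := by
                exact ofReal_rearr (by positivity) (by positivity) (by field_simp) S
      _ ≤ (ENNReal.ofReal (2 * C₁ / B s) * S) * ENNReal.ofReal (C₂ * s ^ ε) := by
          refine (Nq_le_const_mul hq₀ _ (ENNReal.mul_ne_top ENNReal.ofReal_ne_top hStop) _).trans ?_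
          gcongr
          exact hp0 s hs
      _ = _ := by
          rw [mul_right_comm, ← ENNReal.ofReal_mul (by positivity)]
          congr 2
          rw [hc1]
          field_simp
  have hat := ha.1 t ht
  have hBt := hBpos t ht
  have inner1 : Nq q₀ (Ioi t) W ≤ ENNReal.ofReal (D * C₃ * (t ^ ε / B t)) * S := by
    calc _ ≤ Nq q₀ (Ioi t) (fun u => (ENNReal.ofReal (D * t ^ (θ₀ / 2) * (t ^ ε / B t)) * S) *
            ENNReal.ofReal (u ^ (-(θ₀ / 2)))) := by
          apply Nq_mono measurableSet_Ioi
          intro u hu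
          have hu' : t < u := hu
          have hu0 : 0 < u := ht.trans hu
          calc W u ≤ ENNReal.ofReal (u ^ (-θ₀) * (D * (u / t) ^ (θ₀ / 2) * a₀ t)) * k t := by
                simp only [hW]
                gcongr
                · exact (hDa t u ht hu'.le).1
                · exact (Kf_le_N₀ _ _ _ _).trans hN₀le
            _ = ENNReal.ofReal (D * t ^ (θ₀ / 2) * u ^ (-(θ₀ / 2))) *
                  (ENNReal.ofReal (t ^ (-θ₀) * a₀ t) * k t) := by
                rw [← mul_assoc (ENNReal.ofReal (D * t ^ (θ₀ / 2) * u ^ (-(θ₀ / 2)))), ← ENNReal.ofReal_mul (by positivity)]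
                congr 2
                have e1 : u ^ (-θ₀) = u ^ (-(θ₀ / 2)) * u ^ (-(θ₀ / 2)) := by
                  rw [← Real.rpow_add hu0]; congr 1; ring
                have e2 : t ^ (-θ₀) = t ^ (-(θ₀ / 2)) * t ^ (-(θ₀ / 2)) := by
                  rw [← Real.rpow_add ht]; congr 1; ring
                rw [e1, e2, Real.div_rpow hu0.le ht.le, Real.rpow_neg hu0.le, Real.rpow_neg ht.le]
                field_simp
            _ ≤ ENNReal.ofReal (D * t ^ (θ₀ / 2) * u ^ (-(θ₀ / 2))) *
                  (ENNReal.ofReal (t ^ ε / B t) * S) := by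
                exact mul_le_mul_right (fk t ht le_rfl) _
            _ = _ := by
                exact ofReal_rearr (by positivity) (by positivity) (by ring) S
      _ ≤ (ENNReal.ofReal (D * t ^ (θ₀ / 2) * (t ^ ε / B t)) * S) *
            ENNReal.ofReal (C₃ * t ^ (-(θ₀ / 2))) := by
          refine (Nq_le_const_mul hq₀ _ (ENNReal.mul_ne_top ENNReal.ofReal_ne_top hStop) _).trans ?_
          gcongr
          exact hptop t ht
      _ = _ := by
          rw [mul_right_comm, ← ENNReal.ofReal_mul (by positivity)]
          congr 2
          rw [Real.rpow_neg ht.le]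
          field_simp
  have innerAll : ∀ s, Nq q₀ (Ioo 0 s) W ≤ ENNReal.ofReal (c2 * (t ^ ε / B t)) * S := by
    intro s
    calc _ ≤ Nq q₀ (Ioc 0 t ∪ Ioi t) W := by
          apply Nq_mono_set
          rw [Ioc_union_Ioi_eq_Ioi ht.le]
          exact Ioo_subset_Ioi_self
      _ ≤ _ := hUq _ _ _
      _ ≤ ENNReal.ofReal U * (ENNReal.ofReal (c1 * (t ^ ε / B t)) * S +
            ENNReal.ofReal (D * C₃ * (t ^ ε / B t)) * S) := by
          gcongr
          exact inner0 t ht le_rfl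
      _ = _ := by
          rw [← add_mul, ← ENNReal.ofReal_add (by positivity) (by positivity), ← mul_assoc,
            ← ENNReal.ofReal_mul (by positivity)]
          congr 2
          rw [hc2]; ring
  have houter : normL N₀ A₁.N θ₀ r₀ q₀ b₀ a₀ g ≤ ENNReal.ofReal (c3 * t ^ ε) * S := by
    rw [normL_eq]
    have o1 : Nq r₀ (Ioc 0 t) (fun s => ENNReal.ofReal (b₀ s / a₀ s) * Nq q₀ (Ioo 0 s) W) ≤
        ENNReal.ofReal (M * c1 * C₄ * t ^ ε) * S := by
      calc _ ≤ Nq r₀ (Ioc 0 t) (fun s => (ENNReal.ofReal (M * c1) * S) * ENNReal.ofReal (s ^ ε)) := by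
            apply Nq_mono measurableSet_Ioc
            intro s hs
            have hs0 := hs.1
            have hBs := hBpos s hs0
            calc _ ≤ ENNReal.ofReal (M * B s) * (ENNReal.ofReal (c1 * (s ^ ε / B s)) * S) := by
                  gcongr
                  · exact hβ s hs0
                  · exact (Nq_mono_set Ioo_subset_Ioc_self _).trans (inner0 s hs0 hs.2)
              _ = _ := by
                  exact ofReal_rearr (by positivity) (by positivity) (by field_simp) S
        _ ≤ (ENNReal.ofReal (M * c1) * S) * ENNReal.ofReal (C₄ * t ^ ε) := by
            refine (Nq_le_const_mul hr₀ _ (ENNReal.mul_ne_top ENNReal.ofReal_ne_top hStop) _).trans ?_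
            gcongr
            exact hp0r t ht
        _ = _ := by
            rw [mul_right_comm, ← ENNReal.ofReal_mul (by positivity)]
            congr 2
            ring
    have o2 : Nq r₀ (Ioi t) (fun s => ENNReal.ofReal (b₀ s / a₀ s) * Nq q₀ (Ioo 0 s) W) ≤
        ENNReal.ofReal (c2 * t ^ ε) * S := by
      calc _ ≤ Nq r₀ (Ioi t) (fun s => (ENNReal.ofReal (c2 * (t ^ ε / B t)) * S) *
              ENNReal.ofReal (b₀ s / a₀ s)) := by
            apply Nq_mono measurableSet_Ioi
            intro s hs
            rw [mul_comm]
            gcongr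
            exact innerAll s
        _ ≤ (ENNReal.ofReal (c2 * (t ^ ε / B t)) * S) * ENNReal.ofReal (B t) := by
            refine (Nq_le_const_mul hr₀ _ (ENNReal.mul_ne_top ENNReal.ofReal_ne_top hStop) _).trans ?_
            gcongr
            exact (hB t ht).le
        _ = _ := by
            rw [mul_right_comm, ← ENNReal.ofReal_mul (by positivity)]
            congr 2
            field_simp
    rw [← Ioc_union_Ioi_eq_Ioi ht.le]
    refine (hVr _ _ _).trans ?_
    calc _ ≤ ENNReal.ofReal V * (ENNReal.ofReal (M * c1 * C₄ * t ^ ε) * S +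
            ENNReal.ofReal (c2 * t ^ ε) * S) := by
          gcongr
      _ = _ := by
          rw [← add_mul, ← ENNReal.ofReal_add (by positivity) (by positivity), ← mul_assoc,
            ← ENNReal.ofReal_mul (by positivity)]
          congr 2
          rw [hc3]; ring
  have hρt : 0 < ρ t := by rw [hρ]; positivity
  have hsec : ENNReal.ofReal (ρ t) * A₁.N (f - g) ≤ ENNReal.ofReal (t ^ ε) * S := by
    calc _ = ENNReal.ofReal (ρ t / t) * (ENNReal.ofReal t * A₁.N (f - g)) := by
          rw [← mul_assoc, ← ENNReal.ofReal_mul (by positivity), div_mul_cancel₀ _ ht.ne']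
      _ ≤ ENNReal.ofReal (ρ t / t) * k t := by gcongr
      _ = ENNReal.ofReal (t ^ ε) * (ENNReal.ofReal (t ^ (-1 - ε) * ρ t) * k t) := by
          rw [← mul_assoc, ← ENNReal.ofReal_mul (by positivity)]
          congr 2
          rw [Real.rpow_sub ht, Real.rpow_neg ht.le, Real.rpow_one]
          field_simp
      _ ≤ _ := by gcongr; exact hS t ht le_rfl
  calc _ ≤ ENNReal.ofReal (c3 * t ^ ε) * S + ENNReal.ofReal (t ^ ε) * S := add_le_add houter hsec
    _ = _ := by
      rw [← add_mul, ← ENNReal.ofReal_add (by positivity) (by positivity)]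
      congr 2
      ring

lemma stepB {A₁ : QuasiBanach E} {N₀ : E → ℝ≥0∞}
    {θ₀ : ℝ} (hθ₀ : 0 < θ₀) {q₀ r₀ : ℝ≥0∞} (hq₀ : 0 < q₀) (hr₀ : 0 < r₀)
    {a₀ b₀ B ρ : ℝ → ℝ} (ha : Pot a₀)
    (hBpos : ∀ t, 0 < t → 0 < B t) (hBanti : ∀ s t, 0 < s → s ≤ t → B t ≤ B s)
    (hB : ∀ t, 0 < t → tailB r₀ (fun s => b₀ s / a₀ s) t = ENNReal.ofReal (B t))
    (hβB : ∃ C : ℝ, 0 < C ∧ ∀ t, 0 < t → b₀ t / a₀ t ≤ C * B t)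
    (hρ : ∀ t, ρ t = t ^ (1 - θ₀) * (a₀ t * B t)) {ε α : ℝ} (hε : 0 < ε) (hεα : ε ≤ α)
    (hgr : Grow α ρ) :
    ∃ C : ℝ, 0 < C ∧ ∀ (f : E) (t : ℝ), 0 < t → ∀ S : ℝ≥0∞,
      (∀ u, 0 < u → u ≤ t → ENNReal.ofReal (u ^ (-1 - ε) * ρ u) * Kf N₀ A₁.N u f ≤ S) →
      Kf (normL N₀ A₁.N θ₀ r₀ q₀ b₀ a₀) A₁.N (ρ t) f ≤ ENNReal.ofReal (C * t ^ ε) * S := by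
  obtain ⟨C, hC, h⟩ := stepB_core (A₁ := A₁) (N₀ := N₀) hθ₀ hq₀ hr₀ ha hBpos hBanti hB hβB hρ hε
  obtain ⟨hρpos, G, hG, hgr⟩ := hgr
  refine ⟨C, hC, fun f t ht S hS => ?_⟩
  have hρt := hρpos t ht
  have hte : 0 < t ^ ε := Real.rpow_pos_of_pos ht _
  by_cases hStop : S = ∞
  · rw [hStop, ENNReal.mul_top (by simp; positivity)]
    exact le_top
  have hKfin : Kf N₀ A₁.N t f ≠ ∞ := by
    intro hK
    have := hS t ht le_rfl
    rw [hK, ENNReal.mul_top (by simp; positivity)] at this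
    exact hStop (top_le_iff.1 this)
  have main : ∀ δ : ℝ, 0 < δ → Kf (normL N₀ A₁.N θ₀ r₀ q₀ b₀ a₀) A₁.N (ρ t) f ≤
      ENNReal.ofReal (C * t ^ ε) * S + ENNReal.ofReal δ := by
    intro δ hδ
    set P : ℝ := C * t ^ ε * (G * t ^ (-ε) * ρ t) with hP
    have hP0 : 0 < P := by positivity
    set η : ℝ := δ / P with hη
    have hη0 : 0 < η := by positivity
    set k : ℝ → ℝ≥0∞ := fun s => Kf N₀ A₁.N s f + ENNReal.ofReal (η * s) with hk
    have hlt : Kf N₀ A₁.N t f < k t := by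
      simp only [hk]
      exact ENNReal.lt_add_right hKfin (by simp; positivity)
    obtain ⟨g, hg⟩ : ∃ g, N₀ g + ENNReal.ofReal t * A₁.N (f - g) < k t := by
      conv_lhs at hlt => unfold Kf
      exact iInf_lt_iff.1 hlt
    have := h k (by
        intro s t hs hst
        have ht := hs.trans_le hst
        simp only [hk]
        rw [mul_add]
        gcongr
        · exact Kf_quasi _ _ _ hs hst
        · rw [← ENNReal.ofReal_mul (by positivity)]
          apply ENNReal.ofReal_le_ofReal
          apply le_of_eq
          field_simp) f g t ht (fun s _ _ => le_self_add) hg.le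
        (S + ENNReal.ofReal (η * (G * t ^ (-ε) * ρ t))) (by
          intro u hu hut
          simp only [hk]
          rw [mul_add]
          have hρu := hρpos u hu
          gcongr
          · exact hS u hu hut
          · rw [← ENNReal.ofReal_mul (by positivity)]
            apply ENNReal.ofReal_le_ofReal
            have e1 : u ^ (-1 - ε) * ρ u * (η * u) = η * (u ^ (-ε) * ρ u) := by
              rw [Real.rpow_sub hu, Real.rpow_neg hu.le, Real.rpow_neg hu.le, Real.rpow_one]
              field_simp
            rw [e1]
            refine mul_le_mul_of_nonneg_left ?_ hη0.le
            calc u ^ (-ε) * ρ u ≤ u ^ (-ε) * (G * (u / t) ^ α * ρ t) := by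
                  gcongr
                  exact (hgr u t hu hut).2
              _ ≤ u ^ (-ε) * (G * (u / t) ^ ε * ρ t) := by
                  gcongr ?_ * (_ * ?_ * _)
                  exact Real.rpow_le_rpow_of_exponent_ge (by positivity) ((div_le_one ht).2 hut) hεα
              _ = _ := by
                  rw [Real.div_rpow hu.le ht.le, Real.rpow_neg hu.le, Real.rpow_neg ht.le]
                  field_simp)
    calc _ ≤ normL N₀ A₁.N θ₀ r₀ q₀ b₀ a₀ g + ENNReal.ofReal (ρ t) * A₁.N (f - g) := by
          conv_lhs => unfold Kf
          exact iInf_le _ g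
      _ ≤ _ := this
      _ = _ := by
          rw [mul_add, ← ENNReal.ofReal_mul (by positivity)]
          congr 2
          rw [hη, hP]
          field_simp
  refine ENNReal.le_of_forall_pos_le_add fun δ hδ _ => ?_
  have := main δ (by exact_mod_cast hδ)
  simpa using this

/-- Discrete quasi-norm over `ℤ`. -/
def dN (r : ℝ≥0∞) (x : ℤ → ℝ≥0∞) : ℝ≥0∞ :=
  if r = ∞ then ⨆ n, x n else (∑' n, x n ^ r.toReal) ^ r⁻¹.toReal

lemma rpow_inv_cancel {r : ℝ≥0∞} (hr : 0 < r) (hr' : r ≠ ∞) (x : ℝ≥0∞) :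
    (x ^ r.toReal) ^ r⁻¹.toReal = x := by
  rw [← ENNReal.rpow_mul, toReal_inv_mul hr hr', ENNReal.rpow_one]

lemma dN_kernel {r : ℝ≥0∞} (hr : 0 < r) {k : ℤ → ℤ → ℝ≥0∞} {S : ℝ≥0∞}
    (hk1 : ∀ n m, k n m ≤ 1)
    (hkS : r ≠ ∞ → ∀ m, ∑' n, k n m ^ r.toReal ≤ S) {c : ℝ≥0∞} {x y : ℤ → ℝ≥0∞}
    (h : ∀ n, x n ≤ c * ⨆ m, k n m * y m) :
    dN r x ≤ (c * (1 + S ^ r⁻¹.toReal)) * dN r y := by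
  by_cases hr' : r = ∞
  · simp only [dN, if_pos hr']
    refine iSup_le fun n => (h n).trans (mul_le_mul' ?_ ?_)
    · calc c = c * 1 := (mul_one c).symm
        _ ≤ _ := by gcongr; exact le_self_add
    · refine iSup_mono fun m => ?_
      calc _ ≤ 1 * y m := by gcongr; exact hk1 n m
        _ = _ := one_mul _
  · have hp : 0 < r.toReal := ENNReal.toReal_pos hr.ne' hr'
    have hp' : 0 ≤ r⁻¹.toReal := ENNReal.toReal_nonneg
    simp only [dN, if_neg hr']
    have hs : ∀ n, (⨆ m, k n m * y m) ^ r.toReal ≤ ∑' m, k n m ^ r.toReal * y m ^ r.toReal := by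
      intro n
      have : (⨆ m, k n m * y m) ≤ (∑' m, k n m ^ r.toReal * y m ^ r.toReal) ^ r⁻¹.toReal := by
        refine iSup_le fun m => ?_
        rw [← rpow_inv_cancel hr hr' (k n m * y m)]
        gcongr
        rw [ENNReal.mul_rpow_of_nonneg _ _ hp.le]
        exact ENNReal.le_tsum m
      calc _ ≤ ((∑' m, k n m ^ r.toReal * y m ^ r.toReal) ^ r⁻¹.toReal) ^ r.toReal := by gcongr
        _ = _ := by rw [← ENNReal.rpow_mul, mul_comm, toReal_inv_mul hr hr', ENNReal.rpow_one]
    calc (∑' n, x n ^ r.toReal) ^ r⁻¹.toReal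
        ≤ (∑' n, c ^ r.toReal * ∑' m, k n m ^ r.toReal * y m ^ r.toReal) ^ r⁻¹.toReal := by
          gcongr with n
          calc _ ≤ (c * ⨆ m, k n m * y m) ^ r.toReal := by gcongr; exact h n
            _ ≤ _ := by rw [ENNReal.mul_rpow_of_nonneg _ _ hp.le]; gcongr; exact hs n
      _ = (c ^ r.toReal * ∑' m, (∑' n, k n m ^ r.toReal) * y m ^ r.toReal) ^ r⁻¹.toReal := by
          rw [ENNReal.tsum_mul_left, ENNReal.tsum_comm]
          simp_rw [ENNReal.tsum_mul_right]
      _ ≤ (c ^ r.toReal * ∑' m, S * y m ^ r.toReal) ^ r⁻¹.toReal := by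
          gcongr with m
          exact hkS hr' m
      _ = c * S ^ r⁻¹.toReal * (∑' m, y m ^ r.toReal) ^ r⁻¹.toReal := by
          rw [ENNReal.tsum_mul_left, ENNReal.mul_rpow_of_nonneg _ _ hp',
            ENNReal.mul_rpow_of_nonneg _ _ hp', rpow_inv_cancel hr hr', mul_assoc]
      _ ≤ _ := by
          gcongr
          exact le_add_self

lemma iUnion_dyadic : (⋃ n : ℤ, Ico ((2:ℝ) ^ n) (2 * 2 ^ n)) = Ioi 0 := by
  ext u
  simp only [mem_iUnion, mem_Ico, mem_Ioi]
  constructor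
  · rintro ⟨n, h, -⟩
    exact lt_of_lt_of_le (by positivity) h
  · intro hu
    refine ⟨Int.log 2 u, ?_, ?_⟩
    · simpa using Int.zpow_log_le_self (b := 2) one_lt_two hu
    · have := Int.lt_zpow_succ_log_self (R := ℝ) (b := 2) one_lt_two u
      rw [zpow_add_one₀ (by norm_num)] at this
      push_cast at this
      linarith

lemma disj_dyadic : Pairwise (Function.onFun Disjoint fun n : ℤ => Ico ((2:ℝ) ^ n) (2 * 2 ^ n)) := by
  intro n m hnm
  rw [Function.onFun, Set.disjoint_left]
  rintro u ⟨h1, h2⟩ ⟨h3, h4⟩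
  apply hnm
  have e : ∀ k : ℤ, (2:ℝ) * 2 ^ k = 2 ^ (k + 1) := fun k => by
    rw [zpow_add_one₀ (by norm_num)]; ring
  rw [e] at h2 h4
  have a1 := (zpow_lt_zpow_iff_right₀ (one_lt_two (α := ℝ))).1 (h1.trans_lt h4)
  have a2 := (zpow_lt_zpow_iff_right₀ (one_lt_two (α := ℝ))).1 (h3.trans_lt h2)
  omega

/-- Quasi-constancy on dyadic scale. -/
def QC (D : ℝ) (F : ℝ → ℝ≥0∞) : Prop :=
  ∀ u v, 0 < u → 0 < v → u ≤ 2 * v → v ≤ 2 * u → F u ≤ ENNReal.ofReal D * F v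

lemma Nq_le_dN {r : ℝ≥0∞} (hr : 0 < r) {D : ℝ} {F : ℝ → ℝ≥0∞} (hF : QC D F) :
    Nq r (Ioi 0) F ≤ ENNReal.ofReal D * dN r (fun n => F (2 ^ n)) := by
  have hmem : ∀ (n : ℤ) u, u ∈ Ico ((2:ℝ) ^ n) (2 * 2 ^ n) → F u ≤ ENNReal.ofReal D * F (2 ^ n) := by
    intro n u hu
    have h2 : (0:ℝ) < 2 ^ n := by positivity
    exact hF u _ (h2.trans_le hu.1) h2 hu.2.le (by linarith [hu.1])
  by_cases hr' : r = ∞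
  · simp only [dN, if_pos hr', Nq, LqNorm]
    refine essSup_le_of_ae_le _ ?_
    filter_upwards [ae_restrict_mem measurableSet_Ioi] with u hu
    rw [← iUnion_dyadic, mem_iUnion] at hu
    obtain ⟨n, hn⟩ := hu
    simp only [hr', ENNReal.inv_top, ENNReal.toReal_zero, neg_zero, Real.rpow_zero,
      ENNReal.ofReal_one, one_mul]
    exact (hmem n u hn).trans (by gcongr; exact le_iSup (fun n : ℤ => F (2 ^ n)) n)
  · have hp : 0 < r.toReal := ENNReal.toReal_pos hr.ne' hr'
    simp only [dN, if_neg hr', Nq, LqNorm]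
    rw [← iUnion_dyadic, lintegral_iUnion (fun n => measurableSet_Ico) disj_dyadic]
    have hle : ∀ n : ℤ, ∫⁻ u in Ico ((2:ℝ) ^ n) (2 * 2 ^ n),
        (ENNReal.ofReal (u ^ (-(r⁻¹.toReal))) * F u) ^ r.toReal
        ≤ ENNReal.ofReal D ^ r.toReal * F (2 ^ n) ^ r.toReal := by
      intro n
      have h2 : (0:ℝ) < 2 ^ n := by positivity
      calc _ ≤ ∫⁻ u in Ico ((2:ℝ) ^ n) (2 * 2 ^ n), ENNReal.ofReal (2 ^ n)⁻¹ *
            (ENNReal.ofReal D * F (2 ^ n)) ^ r.toReal := by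
            apply setLIntegral_mono' measurableSet_Ico
            intro u hu
            rw [wgt_rpow hr hr' (h2.trans_le hu.1)]
            gcongr
            · exact hu.1
            · exact hmem n u hu
        _ = _ := by
            rw [lintegral_const, Measure.restrict_apply_univ, Real.volume_Ico, mul_right_comm,
              ← ENNReal.ofReal_mul (by positivity), ENNReal.mul_rpow_of_nonneg _ _ hp.le]
            have : ((2:ℝ) ^ n)⁻¹ * (2 * 2 ^ n - 2 ^ n) = 1 := by field_simp; ring
            rw [this, ENNReal.ofReal_one, one_mul]
    calc _ ≤ (∑' n : ℤ, ENNReal.ofReal D ^ r.toReal * F (2 ^ n) ^ r.toReal) ^ r⁻¹.toReal := by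
          gcongr with n
          exact hle n
      _ = _ := by
          rw [ENNReal.tsum_mul_left, ENNReal.mul_rpow_of_nonneg _ _ ENNReal.toReal_nonneg,
            rpow_inv_cancel hr hr']

lemma dN_le_Nq {r : ℝ≥0∞} (hr : 0 < r) {D : ℝ} (hD : 0 < D) : ∃ C : ℝ, 0 < C ∧
    ∀ {F : ℝ → ℝ≥0∞}, QC D F → dN r (fun n => F (2 ^ n)) ≤ ENNReal.ofReal C * Nq r (Ioi 0) F := by
  by_cases hr' : r = ∞
  · obtain ⟨c, hc, hlow⟩ := Nq_low hr
    refine ⟨D * c⁻¹, by positivity, fun {F} hF => ?_⟩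
    simp only [dN, if_pos hr']
    refine iSup_le fun n => ?_
    have h2 : (0:ℝ) < 2 ^ n := by positivity
    have h := hlow (2 ^ n) h2 (ENNReal.ofReal D⁻¹ * F (2 ^ n)) F (by
      intro u hu
      calc _ ≤ ENNReal.ofReal D⁻¹ * (ENNReal.ofReal D * F u) := by
            gcongr
            exact hF _ u h2 (h2.trans hu.1) (by linarith [hu.1]) hu.2.le
        _ = F u := by
            rw [← mul_assoc, ← ENNReal.ofReal_mul (by positivity), inv_mul_cancel₀ hD.ne',
              ENNReal.ofReal_one, one_mul])
    calc F (2 ^ n) = ENNReal.ofReal (D * c⁻¹) * (ENNReal.ofReal c * (ENNReal.ofReal D⁻¹ * F (2 ^ n))) := by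
          rw [← mul_assoc, ← mul_assoc, ← ENNReal.ofReal_mul (by positivity),
            ← ENNReal.ofReal_mul (by positivity)]
          have : D * c⁻¹ * c * D⁻¹ = 1 := by field_simp
          rw [this, ENNReal.ofReal_one, one_mul]
      _ ≤ _ := by
          gcongr
          refine h.trans (Nq_mono_set ?_ _)
          intro u hu
          exact h2.trans hu.1
  · have hp : 0 < r.toReal := ENNReal.toReal_pos hr.ne' hr'
    refine ⟨(2:ℝ) ^ r⁻¹.toReal * D, by positivity, fun {F} hF => ?_⟩
    simp only [dN, if_neg hr', Nq, LqNorm]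
    have hle : ∀ n : ℤ, F (2 ^ n) ^ r.toReal ≤ (ENNReal.ofReal 2 * ENNReal.ofReal D ^ r.toReal) *
        ∫⁻ u in Ico ((2:ℝ) ^ n) (2 * 2 ^ n),
        (ENNReal.ofReal (u ^ (-(r⁻¹.toReal))) * F u) ^ r.toReal := by
      intro n
      have h2 : (0:ℝ) < 2 ^ n := by positivity
      have hfin : ENNReal.ofReal D ^ r.toReal ≠ ∞ := ENNReal.rpow_ne_top_of_nonneg hp.le ENNReal.ofReal_ne_top
      calc F (2 ^ n) ^ r.toReal = (ENNReal.ofReal 2 * F (2 ^ n) ^ r.toReal) * ENNReal.ofReal (1 / 2) := by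
            rw [mul_right_comm, ← ENNReal.ofReal_mul (by positivity)]
            norm_num
        _ ≤ (ENNReal.ofReal 2 * F (2 ^ n) ^ r.toReal) *
              ∫⁻ u in Ioo ((2:ℝ) ^ n) (2 * 2 ^ n), ENNReal.ofReal u⁻¹ := by
            gcongr
            exact lint_inv_low h2
        _ = ENNReal.ofReal 2 * ∫⁻ u in Ioo ((2:ℝ) ^ n) (2 * 2 ^ n),
              ENNReal.ofReal u⁻¹ * F (2 ^ n) ^ r.toReal := by
            rw [lintegral_mul_const _ (by fun_prop)]
            ring
        _ ≤ ENNReal.ofReal 2 * ∫⁻ u in Ioo ((2:ℝ) ^ n) (2 * 2 ^ n), ENNReal.ofReal D ^ r.toReal *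
              (ENNReal.ofReal (u ^ (-(r⁻¹.toReal))) * F u) ^ r.toReal := by
            gcongr ENNReal.ofReal 2 * ?_
            apply setLIntegral_mono' measurableSet_Ioo
            intro u hu
            have hu0 : 0 < u := h2.trans hu.1
            rw [wgt_rpow hr hr' hu0]
            calc _ ≤ ENNReal.ofReal u⁻¹ * (ENNReal.ofReal D * F u) ^ r.toReal := by
                  gcongr
                  exact hF _ u h2 hu0 (by linarith [hu.1]) hu.2.le
              _ = _ := by rw [ENNReal.mul_rpow_of_nonneg _ _ hp.le]; ring
        _ ≤ _ := by
            rw [lintegral_const_mul' _ _ hfin, mul_assoc]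
            gcongr
            exact Ioo_subset_Ico_self
    calc _ ≤ (∑' n : ℤ, (ENNReal.ofReal 2 * ENNReal.ofReal D ^ r.toReal) *
        ∫⁻ u in Ico ((2:ℝ) ^ n) (2 * 2 ^ n),
        (ENNReal.ofReal (u ^ (-(r⁻¹.toReal))) * F u) ^ r.toReal) ^ r⁻¹.toReal := by
          gcongr with n
          exact hle n
      _ = _ := by
          rw [ENNReal.tsum_mul_left, ← lintegral_iUnion (fun n => measurableSet_Ico) disj_dyadic,
            iUnion_dyadic, ENNReal.mul_rpow_of_nonneg _ _ ENNReal.toReal_nonneg,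
            ENNReal.mul_rpow_of_nonneg _ _ ENNReal.toReal_nonneg,
            rpow_inv_cancel hr hr', ENNReal.ofReal_mul (by positivity),
            ENNReal.ofReal_rpow_of_nonneg (by norm_num) ENNReal.toReal_nonneg]

/-- The two basic properties of a K-functional as a function of its parameter. -/
def KP (K : ℝ → ℝ≥0∞) : Prop :=
  (∀ s t, s ≤ t → K s ≤ K t) ∧ ∀ s t, 0 < s → s ≤ t → K t ≤ ENNReal.ofReal (t / s) * K s

lemma KP.ratio {K : ℝ → ℝ≥0∞} (h : KP K) {M x y : ℝ} (hM : 1 ≤ M) (hy : 0 < y)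
    (hxy : x ≤ M * y) : K x ≤ ENNReal.ofReal M * K y := by
  calc K x ≤ K (M * y) := h.1 _ _ hxy
    _ ≤ ENNReal.ofReal (M * y / y) * K y := h.2 _ _ hy (by nlinarith)
    _ = _ := by rw [mul_div_cancel_right₀ _ hy.ne']

lemma psi_ratio {a : ℝ → ℝ} (ha : Pot a) {θ : ℝ} (hθ : 0 < θ) (hθ' : θ ≤ 1) :
    ∃ D : ℝ, 1 ≤ D ∧ ∀ M x y : ℝ, 1 ≤ M → 0 < x → 0 < y → x ≤ M * y → y ≤ M * x →
      x ^ (-θ) * a x ≤ D * M ^ 2 * (y ^ (-θ) * a y) := by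
  obtain ⟨D, hD, h⟩ := ha.2 1 one_pos
  refine ⟨D, hD, fun M x y hM hx hy hxy hyx => ?_⟩
  have hM0 : 0 < M := by linarith
  have hay := ha.1 y hy
  have hax := ha.1 x hx
  have h1 : x ^ (-θ) ≤ M * y ^ (-θ) := by
    calc x ^ (-θ) = M ^ θ * (M * x) ^ (-θ) := by
          rw [Real.mul_rpow hM0.le hx.le, ← mul_assoc, ← Real.rpow_add hM0]
          simp
      _ ≤ M ^ (1:ℝ) * y ^ (-θ) := by
          apply mul_le_mul
          · exact Real.rpow_le_rpow_of_exponent_le hM hθ'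
          · exact Real.rpow_le_rpow_of_nonpos hy hyx (by linarith)
          · positivity
          · positivity
      _ = _ := by rw [Real.rpow_one]
  have h2 : a x ≤ D * M * a y := by
    rcases le_total x y with hle | hle
    · have := (h x y hx hle).2
      rw [Real.rpow_one] at this
      refine this.trans ?_
      gcongr
      rw [div_le_iff₀ hx]; exact hyx
    · have := (h y x hy hle).1
      rw [Real.rpow_one] at this
      refine this.trans ?_
      gcongr
      rw [div_le_iff₀ hy]; exact hxy
  calc _ ≤ (M * y ^ (-θ)) * (D * M * a y) := by gcongr
    _ = _ := by ring

lemma psi_dec {a : ℝ → ℝ} (ha : Pot a) {θ : ℝ} (hθ : 0 < θ) (hθ' : θ ≤ 1) :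
    ∃ D : ℝ, 1 ≤ D ∧ ∀ R x y : ℝ, 1 ≤ R → 0 < x → 0 < y → y ≤ R * x →
      x ^ (-θ) * a x ≤ D * R ^ 2 * (y / x) ^ (θ / 2) * (y ^ (-θ) * a y) := by
  obtain ⟨D₁, hD₁, h₁⟩ := psi_ratio ha hθ hθ'
  obtain ⟨D₂, hD₂, h₂⟩ := ha.2 (θ / 2) (by linarith)
  refine ⟨max D₁ D₂, le_max_of_le_left hD₁, fun R x y hR hx hy hyx => ?_⟩
  have hay := ha.1 y hy
  have hax := ha.1 x hx
  have hm : 1 ≤ max D₁ D₂ := le_max_of_le_left hD₁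
  rcases le_total x y with hle | hle
  · have hone : 1 ≤ (y / x) ^ (θ / 2) := by
      apply Real.one_le_rpow _ (by linarith)
      rwa [one_le_div hx]
    calc _ ≤ D₁ * R ^ 2 * (y ^ (-θ) * a y) := h₁ R x y hR hx hy (by nlinarith) hyx
      _ = D₁ * R ^ 2 * 1 * (y ^ (-θ) * a y) := by ring
      _ ≤ _ := by gcongr; exact le_max_left _ _
  · have e : x ^ (-θ) * (x / y) ^ (θ / 2) = (y / x) ^ (θ / 2) * y ^ (-θ) := by
      have : (y / x) ^ (θ / 2) * (x / y) ^ (θ / 2) = 1 := by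
        rw [← Real.mul_rpow (by positivity) (by positivity)]
        have : y / x * (x / y) = 1 := by field_simp
        rw [this, Real.one_rpow]
      have h3 : (x / y) ^ (θ / 2) * (x / y) ^ (θ / 2) = x ^ θ * y ^ (-θ) := by
        rw [← Real.rpow_add (by positivity), add_halves, Real.div_rpow hx.le hy.le,
          Real.rpow_neg hy.le]; rfl
      have h4 : x ^ (-θ) * x ^ θ = 1 := by rw [← Real.rpow_add hx]; simp
      calc x ^ (-θ) * (x / y) ^ (θ / 2)
          = x ^ (-θ) * ((y / x) ^ (θ / 2) * (x / y) ^ (θ / 2)) * (x / y) ^ (θ / 2) := by rw [this]; ring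
        _ = x ^ (-θ) * (y / x) ^ (θ / 2) * ((x / y) ^ (θ / 2) * (x / y) ^ (θ / 2)) := by ring
        _ = (y / x) ^ (θ / 2) * y ^ (-θ) * (x ^ (-θ) * x ^ θ) := by rw [h3]; ring
        _ = _ := by rw [h4, mul_one]
    calc x ^ (-θ) * a x ≤ x ^ (-θ) * (D₂ * (x / y) ^ (θ / 2) * a y) := by
          gcongr; exact (h₂ y x hy hle).1
      _ = D₂ * (x ^ (-θ) * (x / y) ^ (θ / 2)) * a y := by ring
      _ = D₂ * 1 * (y / x) ^ (θ / 2) * (y ^ (-θ) * a y) := by rw [e]; ring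
      _ ≤ _ := by
          gcongr
          · exact le_max_right _ _
          · nlinarith

lemma coef_bound {a ρ : ℝ → ℝ} (ha : Pot a) {θ α : ℝ} (hθ : 0 < θ) (hθ' : θ ≤ 1) (hα : 0 < α)
    (hg : Grow α ρ) :
    ∃ D : ℝ, 1 ≤ D ∧ ∀ u t : ℝ, 0 < u → u ≤ t →
      ρ t ^ (-θ) * a (ρ t) * (t / u) ^ (α * (θ / 4)) ≤
        D * (ρ u / ρ t) ^ (θ / 4) * (ρ u ^ (-θ) * a (ρ u)) := by
  obtain ⟨hρ, C, hC, h⟩ := hg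
  obtain ⟨D, hD, hψ⟩ := psi_dec ha hθ hθ'
  refine ⟨D * C ^ 2 * C, ?_, fun u t hu hut => ?_⟩
  · have : 1 ≤ C ^ 2 * C := by nlinarith [sq_nonneg (C - 1), mul_self_nonneg C]
    nlinarith
  have ht := hu.trans_le hut
  have hx := hρ t ht
  have hy := hρ u hu
  have hay := ha.1 _ hy
  have hh := (h u t hu hut).2
  have hq : 0 < u / t := by positivity
  have hyx : ρ u ≤ C * ρ t := by
    refine hh.trans ?_
    have : (u / t) ^ α ≤ 1 := Real.rpow_le_one hq.le ((div_le_one ht).2 hut) hα.le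
    have : C * (u / t) ^ α ≤ C * 1 := by gcongr
    nlinarith
  have h1 : (t / u) ^ α ≤ C * (ρ t / ρ u) := by
    have : (t / u) ^ α * (u / t) ^ α = 1 := by
      rw [← Real.mul_rpow (by positivity) (by positivity)]
      have : t / u * (u / t) = 1 := by field_simp
      rw [this, Real.one_rpow]
    rw [← mul_div_assoc, le_div_iff₀ hy]
    calc _ ≤ (t / u) ^ α * (C * (u / t) ^ α * ρ t) := by gcongr
      _ = C * ρ t * ((t / u) ^ α * (u / t) ^ α) := by ring
      _ = _ := by rw [this, mul_one]
  have h2 : (t / u) ^ (α * (θ / 4)) ≤ C * (ρ t / ρ u) ^ (θ / 4) := by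
    rw [Real.rpow_mul (by positivity)]
    calc _ ≤ (C * (ρ t / ρ u)) ^ (θ / 4) := by gcongr
      _ = C ^ (θ / 4) * (ρ t / ρ u) ^ (θ / 4) := Real.mul_rpow (by linarith) (by positivity)
      _ ≤ C ^ (1:ℝ) * (ρ t / ρ u) ^ (θ / 4) := by
          gcongr
          linarith
      _ = _ := by rw [Real.rpow_one]
  have h3 : (ρ u / ρ t) ^ (θ / 2) * (ρ t / ρ u) ^ (θ / 4) = (ρ u / ρ t) ^ (θ / 4) := by
    have e1 : (ρ u / ρ t) ^ (θ / 2) = (ρ u / ρ t) ^ (θ / 4) * (ρ u / ρ t) ^ (θ / 4) := by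
      rw [← Real.rpow_add (by positivity)]; congr 1; ring
    have e2 : (ρ u / ρ t) ^ (θ / 4) * (ρ t / ρ u) ^ (θ / 4) = 1 := by
      rw [← Real.mul_rpow (by positivity) (by positivity)]
      have : ρ u / ρ t * (ρ t / ρ u) = 1 := by field_simp
      rw [this, Real.one_rpow]
    rw [e1, mul_assoc, e2, mul_one]
  calc _ ≤ (D * C ^ 2 * (ρ u / ρ t) ^ (θ / 2) * (ρ u ^ (-θ) * a (ρ u))) *
        (C * (ρ t / ρ u) ^ (θ / 4)) := by
        exact mul_le_mul (hψ C _ _ hC hx hy hyx) h2 (by positivity) (by positivity)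
    _ = D * C ^ 2 * C * ((ρ u / ρ t) ^ (θ / 2) * (ρ t / ρ u) ^ (θ / 4)) *
        (ρ u ^ (-θ) * a (ρ u)) := by ring
    _ = _ := by rw [h3]

lemma kappa_exists {ρ : ℝ → ℝ} {α : ℝ} (hα : 0 < α) (hg : Grow α ρ) :
    ∃ (κ : ℤ → ℤ) (L : ℕ), (∀ n, (2:ℝ) ^ κ n ≤ ρ (2 ^ n) ∧ ρ (2 ^ n) ≤ 2 * 2 ^ κ n) ∧
      (∀ n n', n ≤ n' → κ n' ≤ κ n + (n' - n) + L) ∧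
      (∀ n n', n ≤ n' → (κ n : ℝ) + α * (n' - n) ≤ κ n' + L) := by
  obtain ⟨hρ, C, hC, h⟩ := hg
  obtain ⟨L, hL⟩ := pow_unbounded_of_one_lt (2 * C) (one_lt_two (α := ℝ))
  have hκ : ∀ n : ℤ, (2:ℝ) ^ (Int.log 2 (ρ (2 ^ n))) ≤ ρ (2 ^ n) ∧
      ρ (2 ^ n) ≤ 2 * 2 ^ (Int.log 2 (ρ (2 ^ n))) := by
    intro n
    constructor
    · simpa using Int.zpow_log_le_self (b := 2) one_lt_two (hρ (2 ^ n) (by positivity))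
    · have := Int.lt_zpow_succ_log_self (R := ℝ) (b := 2) one_lt_two (ρ (2 ^ n))
      rw [zpow_add_one₀ (by norm_num)] at this
      push_cast at this
      linarith
  refine ⟨fun n => Int.log 2 (ρ (2 ^ n)), L, hκ, ?_, ?_⟩
  · intro n n' hn
    have h1 := (h (2 ^ n) (2 ^ n') (by positivity) (zpow_le_zpow_right₀ one_le_two hn)).1
    set k := Int.log 2 (ρ (2 ^ n))
    set k' := Int.log 2 (ρ (2 ^ n'))
    have : (2:ℝ) ^ k' ≤ 2 ^ (k + (n' - n) + L) := by
      calc (2:ℝ) ^ k' ≤ _ := (hκ n').1.trans h1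
        _ ≤ C * (2 ^ n' / 2 ^ n) * (2 * 2 ^ k) := by gcongr; exact (hκ n).2
        _ = (2 * C) * (2 ^ k * (2 ^ n' / 2 ^ n)) := by ring
        _ ≤ 2 ^ L * (2 ^ k * (2 ^ n' / 2 ^ n)) := by gcongr
        _ = _ := by
          rw [zpow_add₀ (by norm_num), zpow_add₀ (by norm_num), zpow_sub₀ (by norm_num),
            zpow_natCast]; ring
    exact (zpow_le_zpow_iff_right₀ (_root_.one_lt_two (α := ℝ))).1 this
  · intro n n' hn
    have h1 := (h (2 ^ n) (2 ^ n') (by positivity) (zpow_le_zpow_right₀ one_le_two hn)).2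
    have hk := (hκ n).1
    have hk' := (hκ n').2
    beta_reduce
    generalize Int.log 2 (ρ (2 ^ n)) = k at *
    generalize Int.log 2 (ρ (2 ^ n')) = k' at *
    have e : ((2:ℝ) ^ n / 2 ^ n') ^ α = 2 ^ (-(α * ((n':ℝ) - n))) := by
      rw [← zpow_sub₀ (by norm_num), ← Real.rpow_intCast, ← Real.rpow_mul (by norm_num)]
      congr 1
      push_cast
      ring
    have : (2:ℝ) ^ ((k:ℝ) + α * (n' - n)) ≤ 2 ^ ((k':ℝ) + L) := by
      calc (2:ℝ) ^ ((k:ℝ) + α * (n' - n)) = 2 ^ k * 2 ^ (α * ((n':ℝ) - n)) := by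
            rw [Real.rpow_add (by norm_num), Real.rpow_intCast]
        _ ≤ (C * (2 ^ n / 2 ^ n') ^ α * (2 * 2 ^ k')) * 2 ^ (α * ((n':ℝ) - n)) := by
            gcongr
            refine (hk.trans h1).trans ?_
            gcongr
        _ = (2 * C) * 2 ^ k' * (2 ^ (-(α * ((n':ℝ) - n))) * 2 ^ (α * ((n':ℝ) - n))) := by
            rw [e]; ring
        _ = (2 * C) * 2 ^ k' := by
            rw [← Real.rpow_add (by norm_num)]; simp
        _ ≤ 2 ^ L * 2 ^ k' := by gcongr
        _ = _ := by
            rw [Real.rpow_add (by norm_num), Real.rpow_intCast, Real.rpow_natCast]; ring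
    exact (Real.rpow_le_rpow_left_iff _root_.one_lt_two).1 this

lemma kappa_surj {κ : ℤ → ℤ} {L : ℕ} {α : ℝ} (hα : 0 < α)
    (h1 : ∀ n n', n ≤ n' → κ n' ≤ κ n + (n' - n) + L)
    (h2 : ∀ n n', n ≤ n' → (κ n : ℝ) + α * (n' - n) ≤ κ n' + L) (m : ℤ) :
    ∃ N, κ N ≤ m ∧ m ≤ κ N + (L + 1) := by
  have hb : ∃ b : ℤ, ∀ z, κ z ≤ m → z ≤ b := by
    obtain ⟨M, hM⟩ := exists_nat_gt (((m:ℝ) + L - κ 0) / α)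
    refine ⟨M, fun z hz => ?_⟩
    by_contra hlt
    push Not at hlt
    have := h2 0 z (by omega)
    rw [div_lt_iff₀ hα] at hM
    have e1 : (M:ℝ) < z := by exact_mod_cast hlt
    have e2 : (κ z : ℝ) ≤ m := by exact_mod_cast hz
    push_cast at this
    nlinarith
  have hi : ∃ z : ℤ, κ z ≤ m := by
    obtain ⟨M, hM⟩ := exists_nat_gt (((κ 0:ℝ) + L - m) / α)
    refine ⟨-M, ?_⟩
    have := h2 (-M) 0 (by omega)
    rw [div_lt_iff₀ hα] at hM
    push_cast at this
    have : (κ (-M) : ℝ) ≤ m := by nlinarith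
    exact_mod_cast this
  obtain ⟨N, hN, hmax⟩ := Int.exists_greatest_of_bdd hb hi
  refine ⟨N, hN, ?_⟩
  have hn : ¬ κ (N + 1) ≤ m := fun hle => by have := hmax _ hle; omega
  have := h1 N (N + 1) (by omega)
  omega

lemma ofReal_swap2 {x y z w : ℝ} (hx : 0 ≤ x) (hz : 0 ≤ z) (h : x * y = z * w) (S : ℝ≥0∞) :
    ENNReal.ofReal x * (ENNReal.ofReal y * S) = ENNReal.ofReal z * (ENNReal.ofReal w * S) := by
  rw [← mul_assoc, ← mul_assoc, ← ENNReal.ofReal_mul hx, ← ENNReal.ofReal_mul hz, h]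

lemma rho_ratio {ρ : ℝ → ℝ} {α : ℝ} (hα : 0 < α) (hg : Grow α ρ) :
    ∃ R : ℝ, 1 ≤ R ∧ ∀ u v, 0 < u → 0 < v → u ≤ 2 * v → ρ u ≤ R * ρ v := by
  obtain ⟨hρ, C, hC, h⟩ := hg
  refine ⟨2 * C, by linarith, fun u v hu hv huv => ?_⟩
  have hρv := hρ v hv
  rcases le_total u v with hle | hle
  · have h1 := (h u v hu hle).2
    have h2 : (u / v) ^ α ≤ 1 :=
      Real.rpow_le_one (by positivity) ((div_le_one hv).2 hle) hα.le
    calc ρ u ≤ _ := h1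
      _ ≤ C * 1 * ρ v := by gcongr
      _ ≤ _ := by nlinarith
  · have h1 := (h v u hv hle).1
    calc ρ u ≤ _ := h1
      _ ≤ C * 2 * ρ v := by gcongr; rw [div_le_iff₀ hv]; exact huv
      _ = _ := by ring

lemma geo_sum {c : ℝ} (hc : 0 < c) :
    ∑' j : ℤ, ENNReal.ofReal ((2:ℝ) ^ (-(c * |(j:ℝ)|))) ≠ ∞ := by
  have hs : Summable (fun j : ℤ => (2:ℝ) ^ (-(c * |(j:ℝ)|))) := by
    have hn : Summable (fun n : ℕ => (2:ℝ) ^ (-(c * (n:ℝ)))) := by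
      have e : (fun n : ℕ => (2:ℝ) ^ (-(c * (n:ℝ)))) = fun n : ℕ => ((2:ℝ) ^ (-c)) ^ n := by
        funext n
        rw [← Real.rpow_natCast, ← Real.rpow_mul (by norm_num)]
        congr 1; ring
      rw [e]
      apply summable_geometric_of_lt_one (by positivity)
      exact Real.rpow_lt_one_of_one_lt_of_neg (by norm_num) (by linarith)
    refine Summable.of_nat_of_neg ?_ ?_ <;> simpa using hn
  exact hs.tsum_ofReal_ne_top

lemma geo_sum_shift {c : ℝ} (k : ℤ) :
    ∑' m : ℤ, ENNReal.ofReal ((2:ℝ) ^ (-(c * |((k - m : ℤ) : ℝ)|))) =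
      ∑' j : ℤ, ENNReal.ofReal ((2:ℝ) ^ (-(c * |(j:ℝ)|))) :=
  (Equiv.subLeft k).tsum_eq (fun j : ℤ => ENNReal.ofReal ((2:ℝ) ^ (-(c * |(j:ℝ)|))))

lemma fiber_sum {κ : ℤ → ℤ} {L : ℕ} {α : ℝ} (hα : 0 < α)
    (h2 : ∀ n n', n ≤ n' → (κ n : ℝ) + α * (n' - n) ≤ κ n' + L) :
    ∃ S : ℝ≥0∞, S ≠ ∞ ∧ ∀ m, ∑' n, (if m = κ n then (1:ℝ≥0∞) else 0) ≤ S := by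
  obtain ⟨M, hM⟩ := exists_nat_gt ((L : ℝ) / α)
  rw [div_lt_iff₀ hα] at hM
  refine ⟨(2 * M + 1 : ℕ), ENNReal.natCast_ne_top _, fun m => ?_⟩
  by_cases hex : ∃ n₀, m = κ n₀
  · obtain ⟨n₀, hn₀⟩ := hex
    have key : ∀ n n', n ≤ n' → κ n = κ n' → n' - n ≤ M := by
      intro n n' hn he
      have := h2 n n' hn
      rw [he] at this
      by_contra hlt
      push Not at hlt
      have e1 : (M:ℝ) < (n':ℝ) - n := by exact_mod_cast hlt
      nlinarith
    have hsupp : ∀ n ∉ Finset.Icc (n₀ - M) (n₀ + M), (if m = κ n then (1:ℝ≥0∞) else 0) = 0 := by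
      intro n hn
      rw [if_neg]
      intro he
      apply hn
      rw [Finset.mem_Icc]
      rcases le_total n n₀ with hle | hle
      · have := key n n₀ hle (by rw [← he, hn₀])
        omega
      · have := key n₀ n hle (by rw [← he, hn₀])
        omega
    rw [tsum_eq_sum hsupp]
    calc _ ≤ ∑ n ∈ Finset.Icc (n₀ - M) (n₀ + M), (1:ℝ≥0∞) := by
          gcongr with n
          split_ifs <;> simp
      _ = _ := by
          rw [Finset.sum_const, Int.card_Icc, nsmul_eq_mul, mul_one]
          congr 1
          omega
  · push Not at hex
    simp [hex]

lemma core_lemma {a ρ : ℝ → ℝ} (ha : Pot a) {θ α : ℝ} (hθ : 0 < θ) (hθ' : θ ≤ 1) (hα : 0 < α)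
    (hg : Grow α ρ) {r : ℝ≥0∞} (hr : 0 < r) {CA CB : ℝ} (hCA : 0 < CA) (hCB : 0 < CB) :
    ∃ C : ℝ≥0∞, C ≠ ∞ ∧ ∀ K K' : ℝ → ℝ≥0∞, KP K → KP K' →
      (∀ t, 0 < t → ENNReal.ofReal (ρ t / t) * K t ≤ ENNReal.ofReal CA * K' (ρ t)) →
      (∀ t, 0 < t → ∀ S, (∀ u, 0 < u → u ≤ t →
          ENNReal.ofReal (u ^ (-1 - α * (θ / 4)) * ρ u) * K u ≤ S) →
        K' (ρ t) ≤ ENNReal.ofReal (CB * t ^ (α * (θ / 4))) * S) →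
      Nq r (Ioi 0) (fun u => ENNReal.ofReal (ρ u ^ (-θ) * a (ρ u) * (ρ u / u)) * K u) ≤
        C * Nq r (Ioi 0) (fun v => ENNReal.ofReal (v ^ (-θ) * a v) * K' v) ∧
      Nq r (Ioi 0) (fun v => ENNReal.ofReal (v ^ (-θ) * a v) * K' v) ≤
        C * Nq r (Ioi 0) (fun u => ENNReal.ofReal (ρ u ^ (-θ) * a (ρ u) * (ρ u / u)) * K u) := by
  obtain ⟨D, hD, hψ⟩ := psi_ratio ha hθ hθ'
  obtain ⟨Dc, hDc, hcoef⟩ := coef_bound ha hθ hθ' hα hg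
  obtain ⟨R, hR, hrho⟩ := rho_ratio hα hg
  obtain ⟨κ, L, hκ, hκ1, hκ2⟩ := kappa_exists hα hg
  obtain ⟨S₁, hS₁, hfib⟩ := fiber_sum hα hκ2
  have hρ := hg.1
  have hapos := ha.1
  -- quasi-constancy
  have hΦr : ∀ K', KP K' → ∀ M x y : ℝ, 1 ≤ M → 0 < x → 0 < y → x ≤ M * y → y ≤ M * x →
      ENNReal.ofReal (x ^ (-θ) * a x) * K' x ≤
        ENNReal.ofReal (D * M ^ 3) * (ENNReal.ofReal (y ^ (-θ) * a y) * K' y) := by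
    intro K' hK' M x y hM hx hy hxy hyx
    have := hapos y hy
    calc _ ≤ ENNReal.ofReal (D * M ^ 2 * (y ^ (-θ) * a y)) * (ENNReal.ofReal M * K' y) := by
          exact mul_le_mul' (ENNReal.ofReal_le_ofReal (hψ M x y hM hx hy hxy hyx))
            (hK'.ratio hM hy hxy)
      _ = _ := by
          exact ofReal_swap2 (by positivity) (by positivity) (by ring) _
  have hΦ : ∀ K', KP K' → QC (D * 2 ^ 3) (fun v => ENNReal.ofReal (v ^ (-θ) * a v) * K' v) :=
    fun K' hK' u v hu hv huv hvu => hΦr K' hK' 2 u v one_le_two hu hv huv hvu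
  have hG : ∀ K, KP K → QC (D * R ^ 2 * (R * 2) * 2)
      (fun u => ENNReal.ofReal (ρ u ^ (-θ) * a (ρ u) * (ρ u / u)) * K u) := by
    intro K hK u v hu hv huv hvu
    have hρu := hρ u hu
    have hρv := hρ v hv
    have := hapos _ hρv
    have := hapos _ hρu
    have h1 := hrho u v hu hv huv
    have h2 := hrho v u hv hu hvu
    have h3 : ρ u / u ≤ R * 2 * (ρ v / v) := by
      rw [div_le_iff₀ hu]
      calc ρ u ≤ R * ρ v := h1
        _ = R * (ρ v / v) * v := by field_simp
        _ ≤ R * (ρ v / v) * (2 * u) := by gcongr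
        _ = _ := by ring
    beta_reduce
    calc _ ≤ ENNReal.ofReal ((D * R ^ 2 * (ρ v ^ (-θ) * a (ρ v))) * (R * 2 * (ρ v / v))) *
          (ENNReal.ofReal 2 * K v) := by
          refine mul_le_mul' (ENNReal.ofReal_le_ofReal ?_) (hK.ratio one_le_two hv huv)
          exact mul_le_mul (hψ R _ _ hR hρu hρv h1 h2) h3 (by positivity) (by positivity)
      _ = _ := by
          exact ofReal_swap2 (by positivity) (by positivity) (by ring) _
  have hDΦ : 0 < D * 2 ^ 3 := by positivity
  have hDG : 0 < D * R ^ 2 * (R * 2) * 2 := by positivity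
  set DΦ := D * 2 ^ 3
  set DG := D * R ^ 2 * (R * 2) * 2
  obtain ⟨EΦ, hEΦ, hdΦ⟩ := dN_le_Nq hr hDΦ
  obtain ⟨EG, hEG, hdG⟩ := dN_le_Nq hr hDG
  -- first direction, constants
  set S₂ : ℝ≥0∞ := ∑' j : ℤ, ENNReal.ofReal ((2:ℝ) ^ (-(θ / 4 * r.toReal * |(j:ℝ)|)))
  have hS₂ : r ≠ ∞ → S₂ ≠ ∞ := fun hr' =>
    geo_sum (mul_pos (by linarith) (ENNReal.toReal_pos hr.ne' hr'))
  have hS₂' : S₂ ^ r⁻¹.toReal ≠ ∞ := by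
    by_cases hr' : r = ∞
    · simp [hr']
    · exact ENNReal.rpow_ne_top_of_nonneg ENNReal.toReal_nonneg (hS₂ hr')
  set c₁ : ℝ≥0∞ := ENNReal.ofReal (CA * DΦ)
  set M : ℝ := 2 ^ (L + 1)
  have hM : 1 ≤ M := one_le_pow₀ one_le_two
  set Q : ℝ := R * 2 * (2 ^ (L + 1) * 2 ^ (2 * L))
  have hQ : 0 < Q := by positivity
  set c₂r : ℝ := D * M ^ 3 * DΦ * (CB * (Dc * Q * DG))
  have c₂eq : c₂r = D * M ^ 3 * DΦ * (CB * (Dc * Q * DG)) := rfl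
  set C₁ : ℝ≥0∞ := ENNReal.ofReal DG * ((c₁ * (1 + S₁ ^ r⁻¹.toReal)) * ENNReal.ofReal EΦ)
  set C₂ : ℝ≥0∞ := ENNReal.ofReal DΦ * ((ENNReal.ofReal c₂r * (1 + S₂ ^ r⁻¹.toReal)) *
    ENNReal.ofReal EG)
  have hC₁ : C₁ ≠ ∞ := by
    have := ENNReal.rpow_ne_top_of_nonneg (y := r⁻¹.toReal) ENNReal.toReal_nonneg hS₁
    finiteness
  have hC₂ : C₂ ≠ ∞ := by finiteness
  refine ⟨C₁ + C₂, by finiteness, fun K K' hK hK' hA hB => ⟨?_, ?_⟩⟩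
  · set Φ := fun v => ENNReal.ofReal (v ^ (-θ) * a v) * K' v with Φdef
    set G := fun u => ENNReal.ofReal (ρ u ^ (-θ) * a (ρ u) * (ρ u / u)) * K u with Gdef
    have hx : ∀ n : ℤ, G (2 ^ n) ≤ c₁ * ⨆ m, (if m = κ n then (1:ℝ≥0∞) else 0) * Φ (2 ^ m) := by
      intro n
      have h2n : (0:ℝ) < 2 ^ n := by positivity
      have hρn := hρ _ h2n
      have := hapos _ hρn
      have hs : Φ (2 ^ κ n) ≤ ⨆ m, (if m = κ n then (1:ℝ≥0∞) else 0) * Φ (2 ^ m) := by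
        refine le_trans ?_ (le_iSup _ (κ n))
        simp
      calc G (2 ^ n) = ENNReal.ofReal (ρ (2 ^ n) ^ (-θ) * a (ρ (2 ^ n))) *
            (ENNReal.ofReal (ρ (2 ^ n) / 2 ^ n) * K (2 ^ n)) := by
            rw [Gdef, ← mul_assoc, ← ENNReal.ofReal_mul (by positivity)]
        _ ≤ ENNReal.ofReal (ρ (2 ^ n) ^ (-θ) * a (ρ (2 ^ n))) *
            (ENNReal.ofReal CA * K' (ρ (2 ^ n))) :=
            mul_le_mul' le_rfl (hA _ h2n)
        _ = ENNReal.ofReal CA * Φ (ρ (2 ^ n)) := by rw [Φdef]; ring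
        _ ≤ ENNReal.ofReal CA * (ENNReal.ofReal DΦ * Φ (2 ^ κ n)) := by
            gcongr
            exact hΦ K' hK' _ _ hρn (by positivity) (hκ n).2 (by linarith [(hκ n).1])
        _ = c₁ * Φ (2 ^ κ n) := by rw [← mul_assoc, ← ENNReal.ofReal_mul hCA.le]
        _ ≤ _ := by gcongr
    have hker := dN_kernel (r := r) hr (k := fun n m => if m = κ n then (1:ℝ≥0∞) else 0) (S := S₁)
      (fun n m => by beta_reduce; split_ifs <;> simp)
      (fun hr' m => by
        have hp : 0 < r.toReal := ENNReal.toReal_pos hr.ne' hr'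
        refine le_trans (le_of_eq ?_) (hfib m)
        congr 1
        funext n
        split_ifs <;> simp [hp]) hx
    calc Nq r (Ioi 0) G ≤ _ := Nq_le_dN hr (hG K hK)
      _ ≤ ENNReal.ofReal DG * ((c₁ * (1 + S₁ ^ r⁻¹.toReal)) *
          (ENNReal.ofReal EΦ * Nq r (Ioi 0) Φ)) := by
          gcongr
          exact hker.trans (by gcongr; exact hdΦ (hΦ K' hK'))
      _ = C₁ * Nq r (Ioi 0) Φ := by ring
      _ ≤ _ := by gcongr; exact le_self_add
  · set Φ := fun v => ENNReal.ofReal (v ^ (-θ) * a v) * K' v with Φdef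
    set G := fun u => ENNReal.ofReal (ρ u ^ (-θ) * a (ρ u) * (ρ u / u)) * K u with Gdef
    have hx : ∀ m : ℤ, Φ (2 ^ m) ≤ ENNReal.ofReal c₂r *
        ⨆ n, ENNReal.ofReal ((2:ℝ) ^ (-(θ / 4 * |((κ n - m : ℤ) : ℝ)|))) * G (2 ^ n) := by
      intro m
      set T := ⨆ n, ENNReal.ofReal ((2:ℝ) ^ (-(θ / 4 * |((κ n - m : ℤ) : ℝ)|))) * G (2 ^ n) with hT
      obtain ⟨N, hN1, hN2⟩ := kappa_surj hα hκ1 hκ2 m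
      have ht : (0:ℝ) < 2 ^ N := by positivity
      have hρt := hρ _ ht
      have hat := hapos _ hρt
      set t : ℝ := 2 ^ N with tdef
      set ψt := ρ t ^ (-θ) * a (ρ t) with hψt
      have hψpos : 0 < ψt := by positivity
      set ε := α * (θ / 4) with hε
      -- the bound for each `u ≤ t`
      have hu : ∀ u, 0 < u → u ≤ t → ENNReal.ofReal (u ^ (-1 - ε) * ρ u) * K u ≤
          ENNReal.ofReal ((ψt * t ^ ε)⁻¹ * (Dc * Q * DG)) * T := by
        intro u hu hut
        have hρu := hρ u hu
        have hau := hapos _ hρu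
        obtain ⟨n, hn1, hn2⟩ : ∃ n : ℤ, (2:ℝ) ^ n ≤ u ∧ u < 2 * 2 ^ n := by
          have : u ∈ Ioi (0:ℝ) := hu
          rw [← iUnion_dyadic, mem_iUnion] at this
          exact this
        have h2n : (0:ℝ) < 2 ^ n := by positivity
        have hnN : n ≤ N := (zpow_le_zpow_iff_right₀ (_root_.one_lt_two (α := ℝ))).1 (hn1.trans hut)
        have hc := hcoef u t hu hut
        have hratio : (ρ u / ρ t) ^ (θ / 4) ≤ Q * (2:ℝ) ^ (-(θ / 4 * |((κ n - m : ℤ) : ℝ)|)) := by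
          have hκr : (κ n : ℝ) ≤ κ N + L := by
            have h0 := hκ2 n N hnN
            have : (0:ℝ) ≤ (N:ℝ) - n := by
              have : (n:ℝ) ≤ N := by exact_mod_cast hnN
              linarith
            nlinarith
          have hκi : κ n ≤ κ N + L := by exact_mod_cast hκr
          have hle : κ n - κ N ≤ ((L + 1 : ℕ) : ℤ) + ((2 * L : ℕ) : ℤ) - |κ n - m| := by
            push_cast
            rcases abs_cases (κ n - m) with ⟨h, -⟩ | ⟨h, -⟩ <;> rw [h] <;> omega
          have h1 : ρ u / ρ t ≤ Q * (2:ℝ) ^ (-|κ n - m|) := by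
            rw [div_le_iff₀ hρt]
            calc ρ u ≤ R * ρ (2 ^ n) := hrho u _ hu h2n hn2.le
              _ ≤ R * (2 * 2 ^ κ n) := by gcongr; exact (hκ n).2
              _ = R * 2 * (2 ^ (κ n - κ N) * 2 ^ κ N) := by
                  rw [← zpow_add₀ (by norm_num), sub_add_cancel]; ring
              _ ≤ R * 2 * (2 ^ (((L + 1 : ℕ) : ℤ) + ((2 * L : ℕ) : ℤ) - |κ n - m|) * ρ t) := by
                  gcongr
                  · exact one_le_two
                  · exact (hκ N).1
              _ = _ := by
                  rw [sub_eq_add_neg, zpow_add₀ (by norm_num), zpow_add₀ (by norm_num),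
                    zpow_natCast, zpow_natCast]
                  ring
          have hQ1 : 1 ≤ Q := by
            have e1 : (1:ℝ) ≤ 2 ^ (L + 1) := one_le_pow₀ one_le_two
            have e2 : (1:ℝ) ≤ 2 ^ (2 * L) := one_le_pow₀ one_le_two
            have e3 : (1:ℝ) ≤ R * 2 := by linarith
            exact one_le_mul_of_one_le_of_one_le e3 (one_le_mul_of_one_le_of_one_le e1 e2)
          calc _ ≤ (Q * (2:ℝ) ^ (-|κ n - m|)) ^ (θ / 4) := by gcongr
            _ = Q ^ (θ / 4) * ((2:ℝ) ^ (-|κ n - m|)) ^ (θ / 4) :=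
                Real.mul_rpow hQ.le (by positivity)
            _ ≤ Q ^ (1:ℝ) * ((2:ℝ) ^ (-|κ n - m|)) ^ (θ / 4) := by
                gcongr
                linarith
            _ = _ := by
                rw [Real.rpow_one, ← Real.rpow_intCast, ← Real.rpow_mul (by norm_num)]
                congr 2
                push_cast
                ring
        have hpt : u ^ (-1 - ε) * ρ u ≤ (ψt * t ^ ε)⁻¹ * (Dc * Q *
            (2:ℝ) ^ (-(θ / 4 * |((κ n - m : ℤ) : ℝ)|)) * (ρ u ^ (-θ) * a (ρ u) * (ρ u / u))) := by
          have e1 : u ^ (-1 - ε) = u⁻¹ * (u ^ ε)⁻¹ := by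
            rw [sub_eq_add_neg, Real.rpow_add hu, Real.rpow_neg_one, Real.rpow_neg hu.le]
          have hue : 0 < u ^ ε := by positivity
          have hte : 0 < t ^ ε := by positivity
          rw [Real.div_rpow ht.le hu.le] at hc
          rw [inv_mul_eq_div, le_div_iff₀ (by positivity), e1]
          calc _ = (ψt * (t ^ ε / u ^ ε)) * (ρ u / u) := by field_simp
            _ ≤ (Dc * (ρ u / ρ t) ^ (θ / 4) * (ρ u ^ (-θ) * a (ρ u))) * (ρ u / u) := by gcongr
            _ ≤ (Dc * (Q * (2:ℝ) ^ (-(θ / 4 * |((κ n - m : ℤ) : ℝ)|))) *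
                (ρ u ^ (-θ) * a (ρ u))) * (ρ u / u) := by gcongr
            _ = _ := by ring
        set w := (2:ℝ) ^ (-(θ / 4 * |((κ n - m : ℤ) : ℝ)|)) with hw
        have hw0 : 0 < w := by positivity
        calc _ ≤ ENNReal.ofReal ((ψt * t ^ ε)⁻¹ * (Dc * Q * w *
              (ρ u ^ (-θ) * a (ρ u) * (ρ u / u)))) * K u := by gcongr
          _ = ENNReal.ofReal ((ψt * t ^ ε)⁻¹ * (Dc * Q * w)) * G u := by
              rw [Gdef]
              beta_reduce
              rw [← mul_assoc (ENNReal.ofReal _), ← ENNReal.ofReal_mul (by positivity)]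
              congr 2; ring
          _ ≤ ENNReal.ofReal ((ψt * t ^ ε)⁻¹ * (Dc * Q * w)) * (ENNReal.ofReal DG * G (2 ^ n)) := by
              gcongr
              exact hG K hK u _ hu h2n hn2.le (by linarith)
          _ = ENNReal.ofReal ((ψt * t ^ ε)⁻¹ * (Dc * Q * DG)) * (ENNReal.ofReal w * G (2 ^ n)) := by
              exact ofReal_swap2 (by positivity) (by positivity) (by ring) _
          _ ≤ _ := by
              gcongr
              exact le_iSup (fun n => ENNReal.ofReal
                ((2:ℝ) ^ (-(θ / 4 * |((κ n - m : ℤ) : ℝ)|))) * G (2 ^ n)) n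
      have hKt := hB t ht _ hu
      have hΦt : Φ (ρ t) ≤ ENNReal.ofReal (CB * (Dc * Q * DG)) * T := by
        have hte : 0 < t ^ ε := by positivity
        calc Φ (ρ t) ≤ ENNReal.ofReal ψt * (ENNReal.ofReal (CB * t ^ ε) *
              (ENNReal.ofReal ((ψt * t ^ ε)⁻¹ * (Dc * Q * DG)) * T)) := by
              rw [Φdef]; beta_reduce; gcongr
          _ = _ := by
              rw [← mul_assoc, ← mul_assoc, ← ENNReal.ofReal_mul (by positivity),
                ← ENNReal.ofReal_mul (by positivity)]
              congr 2; field_simp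
      have hup : (2:ℝ) ^ m ≤ M * 2 ^ κ N := by
        calc (2:ℝ) ^ m ≤ 2 ^ (κ N + ((L + 1 : ℕ) : ℤ)) := by
              apply zpow_le_zpow_right₀ one_le_two
              push_cast; exact hN2
          _ = _ := by rw [zpow_add₀ (by norm_num), zpow_natCast]; ring
      have hdown : (2:ℝ) ^ κ N ≤ M * 2 ^ m := by
        calc (2:ℝ) ^ κ N ≤ 2 ^ m := zpow_le_zpow_right₀ one_le_two hN1
          _ ≤ _ := le_mul_of_one_le_left (by positivity) hM
      calc Φ (2 ^ m) ≤ ENNReal.ofReal (D * M ^ 3) * Φ (2 ^ κ N) :=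
            hΦr K' hK' M _ _ hM (by positivity) (by positivity) hup hdown
        _ ≤ ENNReal.ofReal (D * M ^ 3) * (ENNReal.ofReal DΦ * Φ (ρ t)) := by
            gcongr
            exact hΦ K' hK' _ _ (by positivity) hρt (by linarith [(hκ N).1]) (hκ N).2
        _ ≤ ENNReal.ofReal (D * M ^ 3) * (ENNReal.ofReal DΦ *
              (ENNReal.ofReal (CB * (Dc * Q * DG)) * T)) := by gcongr
        _ = _ := by
            rw [← mul_assoc, ← mul_assoc, ← ENNReal.ofReal_mul (by positivity),
              ← ENNReal.ofReal_mul (by positivity)]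
    have hker := dN_kernel (r := r) hr
      (k := fun m n => ENNReal.ofReal ((2:ℝ) ^ (-(θ / 4 * |((κ n - m : ℤ) : ℝ)|)))) (S := S₂)
      (fun m n => by
        rw [ENNReal.ofReal_le_one]
        apply Real.rpow_le_one_of_one_le_of_nonpos one_le_two
        have : 0 ≤ θ / 4 * |((κ n - m : ℤ) : ℝ)| := by positivity
        linarith)
      (fun hr' n => by
        refine le_of_eq ((?_ : _ = _).trans (geo_sum_shift (c := θ / 4 * r.toReal) (κ n)))
        congr 1
        funext m
        rw [ENNReal.ofReal_rpow_of_nonneg (by positivity) ENNReal.toReal_nonneg,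
          ← Real.rpow_mul (by norm_num)]
        congr 2; ring) hx
    calc Nq r (Ioi 0) Φ ≤ _ := Nq_le_dN hr (hΦ K' hK')
      _ ≤ ENNReal.ofReal DΦ * ((ENNReal.ofReal c₂r * (1 + S₂ ^ r⁻¹.toReal)) *
          (ENNReal.ofReal EG * Nq r (Ioi 0) G)) := by
          gcongr
          exact hker.trans (by gcongr; exact hdG (hG K hK))
      _ = C₂ * Nq r (Ioi 0) G := by ring
      _ ≤ _ := by gcongr; exact le_add_self

lemma weight_id {u θ θ₀ c : ℝ} (hu : 0 < u) (hc : 0 < c) (A : ℝ) :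
    u ^ (-((1 - θ) * θ₀ + θ)) * (c ^ (1 - θ) * A) =
      (u ^ (1 - θ₀) * c) ^ (-θ) * A * (u ^ (1 - θ₀) * c / u) := by
  have hp : 0 < u ^ (1 - θ₀) := Real.rpow_pos_of_pos hu _
  have e1 : (u ^ (1 - θ₀) * c) ^ (-θ) * (u ^ (1 - θ₀) * c) = (u ^ (1 - θ₀) * c) ^ (1 - θ) := by
    rw [sub_eq_add_neg 1 θ, add_comm, Real.rpow_add (by positivity), Real.rpow_one]
  have e2 : u ^ (-((1 - θ) * θ₀ + θ)) = (u ^ (1 - θ₀)) ^ (1 - θ) * u⁻¹ := by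
    rw [← Real.rpow_mul hu.le, ← Real.rpow_neg_one u, ← Real.rpow_add hu]
    congr 1; ring
  calc _ = (u ^ (1 - θ₀)) ^ (1 - θ) * c ^ (1 - θ) * A * u⁻¹ := by rw [e2]; ring
    _ = (u ^ (1 - θ₀) * c) ^ (1 - θ) * A * u⁻¹ := by rw [Real.mul_rpow hp.le hc.le]
    _ = _ := by rw [← e1]; ring

theorem theorem13
    (A₀ A₁ : QuasiBanach E)
    (hne : ∃ x : E, x ≠ 0 ∧ A₀.N x ≠ ∞ ∧ A₁.N x ≠ ∞)
    (θ₀ θ : ℝ) (hθ₀ : 0 < θ₀) (hθ₀' : θ₀ < 1) (hθ : 0 < θ) (hθ' : θ ≤ 1)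
    (q₀ r₀ r : ℝ≥0∞) (hq₀ : 0 < q₀) (hr₀ : 0 < r₀) (hr : 0 < r)
    (a a₀ b₀ : ℝ → ℝ)
    (h_sv_a : SlowlyVarying a)
    (h_sv_a₀ : SlowlyVarying a₀)
    (h_sv_b₀ : SlowlyVarying b₀)
    (hfin : LqNorm r₀ (Ioi 1) (svWgt r₀ (fun s => b₀ s / a₀ s)) ≠ ∞)
    (hθ1 : θ = 1 → LqNorm r (Ioo 0 1) (svWgt r (fun s => a s)) ≠ ∞)
    (c₀ ρ : ℝ → ℝ)
    (hc₀ : ∀ t, c₀ t = a₀ t * (LqNorm r₀ (Ioi t) (svWgt r₀ (fun s => b₀ s / a₀ s))).toReal)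
    (hρ : ∀ t, ρ t = t ^ (1 - θ₀) * c₀ t) :
    EquivNorms
      (normK (normL A₀.N A₁.N θ₀ r₀ q₀ b₀ a₀) A₁.N θ r a)
      (normK A₀.N A₁.N ((1 - θ) * θ₀ + θ) r (fun t => c₀ t ^ (1 - θ) * a (ρ t))) := by
  set β : ℝ → ℝ := fun s => b₀ s / a₀ s with hβdef
  have ha : Pot a := pot_of_sv h_sv_a
  have ha₀ : Pot a₀ := pot_of_sv h_sv_a₀
  have hβ : Pot β := pot_div (pot_of_sv h_sv_b₀) ha₀
  rw [LqNorm_svWgt r₀ β one_pos] at hfin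
  set B : ℝ → ℝ := fun t => (tailB r₀ β t).toReal with hBdef
  obtain ⟨hB, hBpos, hBanti, hβB, hBle⟩ := tail_facts hr₀ hβ hfin (B := B) (fun t => rfl)
  set ρ' : ℝ → ℝ := fun t => t ^ (1 - θ₀) * (a₀ t * B t) with hρ'
  have hc : ∀ t, 0 < t → c₀ t = a₀ t * B t := by
    intro t ht
    rw [hc₀, LqNorm_svWgt r₀ β ht]
  have hρρ : ∀ t, 0 < t → ρ t = ρ' t := by
    intro t ht
    rw [hρ, hc t ht]
  have hg : Grow ((1 - θ₀) / 2) ρ' := grow_rho hθ₀ hθ₀' ha₀ hBpos hBanti hBle (fun t => rfl)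
  have hα : 0 < (1 - θ₀) / 2 := by linarith
  obtain ⟨CA, hCA, hA⟩ := stepA (A₁ := A₁) (N₀ := A₀.N) hθ₀ hq₀ hr₀ ha₀ hBpos hB
    (ρ := ρ') (fun t => rfl)
  obtain ⟨CB, hCB, hBB⟩ := stepB (A₁ := A₁) (N₀ := A₀.N) hθ₀ hq₀ hr₀ ha₀ hBpos hBanti hB hβB
    (ρ := ρ') (fun t => rfl) (ε := (1 - θ₀) / 2 * (θ / 4)) (α := (1 - θ₀) / 2)
    (by positivity) (by nlinarith) hg
  obtain ⟨C, hC, hcore⟩ := core_lemma ha hθ hθ' hα hg hr hCA hCB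
  have h1C : 0 < 1 + C := by positivity
  have h1C' : 1 + C ≠ ∞ := by finiteness
  refine ⟨1 + C, h1C, h1C', fun f => ?_⟩
  have hcf := hcore (fun t => Kf A₀.N A₁.N t f)
    (fun t => Kf (normL A₀.N A₁.N θ₀ r₀ q₀ b₀ a₀) A₁.N t f)
    ⟨fun s t h => Kf_mono _ _ _ h, fun s t hs h => Kf_quasi _ _ _ hs h⟩
    ⟨fun s t h => Kf_mono _ _ _ h, fun s t hs h => Kf_quasi _ _ _ hs h⟩
    (fun t ht => hA f t ht) (fun t ht S hS => hBB f t ht S hS)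
  have hR : normK A₀.N A₁.N ((1 - θ) * θ₀ + θ) r (fun t => c₀ t ^ (1 - θ) * a (ρ t)) f =
      Nq r (Ioi 0) (fun u => ENNReal.ofReal (ρ' u ^ (-θ) * a (ρ' u) * (ρ' u / u)) *
        Kf A₀.N A₁.N u f) := by
    rw [normK_eq]
    have hpt : ∀ u ∈ Ioi (0:ℝ), u ^ (-((1 - θ) * θ₀ + θ)) * (c₀ u ^ (1 - θ) * a (ρ u)) =
        ρ' u ^ (-θ) * a (ρ' u) * (ρ' u / u) := by
      intro u hu
      have hu' : 0 < u := hu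
      rw [hρρ u hu', hc u hu']
      exact weight_id hu' (mul_pos (ha₀.1 u hu') (hBpos u hu')) _
    apply le_antisymm <;>
    · apply Nq_mono measurableSet_Ioi
      intro u hu
      beta_reduce
      rw [hpt u hu]
  rw [hR, normK_eq]
  constructor
  · rw [mul_comm, ← div_eq_mul_inv]
    refine ENNReal.div_le_of_le_mul' (hcf.1.trans ?_)
    gcongr
    exact le_add_self
  · refine hcf.2.trans ?_
    gcongr
    exact le_add_self


end
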